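/- Let T_1 := min{t ≥ 0 : ρ̂_max^{(t)} > C_1/((mP)^{1/3} σ_n² d)}. On the event E, under Condition (H) in the sparse-unlearnable regime: (1) N/(76800·log^{3/2}(16NmP/δ)·η σ_0 σ_n³ d^{3/2}) ≤ T_1 ≤ 60N(1+exp(4C_1³))/(η σ_0 σ_n³ d^{3/2}); (2) T_0 < T_1, where T_0 is the signal-learning hitting time; and (3) there exist an unlearnable sample i ∈ S_U, a noise patch j ≠ s(X_i), and a filter r ∈ [m] such that for every iteration t with T_1 ≤ t ≤ T, the memorized noise response satisfies y_i⟨w_r^{(t)}, x_{i,j}⟩ ≥ C_1/(3(mP)^{1/3}). -/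

import Mathlib

open Finset MeasureTheory ProbabilityTheory
open scoped ENNReal NNReal

noncomputable section

namespace AD

/-- Cubic ReLU activation. -/
def phi (z : ℝ) : ℝ := (max 0 z) ^ 3

/-- Negative sigmoid `ψ(z) = 1/(1+e^z)`. -/
def psi (z : ℝ) : ℝ := 1 / (1 + Real.exp z)

/-- Logistic loss `ℓ(z) = log(1+e^{-z})`. -/
def lloss (z : ℝ) : ℝ := Real.log (1 + Real.exp (-z))

/-- Logistic sigmoid `σ(z) = 1/(1+e^{-z})`. -/
def sigm (z : ℝ) : ℝ := 1 / (1 + Real.exp (-z))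

/-- Euclidean inner product on `Fin d → ℝ`. -/
def dot {d : ℕ} (a b : Fin d → ℝ) : ℝ := ∑ k, a k * b k

/-- Squared Euclidean norm. -/
def sqnorm {d : ℕ} (a : Fin d → ℝ) : ℝ := dot a a

/-- First standard basis vector `e₁` (the learnable feature `u`). -/
def e1 (d : ℕ) (hd : 0 < d) : Fin d → ℝ := fun k => if k = (⟨0, hd⟩ : Fin d) then 1 else 0

/-- Last standard basis vector `e_d` (the unlearnable feature `v`). -/
def eLast (d : ℕ) (_hd : 0 < d) : Fin d → ℝ := fun k => if (k : ℕ) = d - 1 then 1 else 0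

/-- The two-layer student network
`f_W(X) = ∑_r ∑_p [φ(⟨w_r,x_p⟩) − φ(−⟨w_r,x_p⟩)]`. -/
def netOut {m P d : ℕ} (w : Fin m → Fin d → ℝ) (X : Fin P → Fin d → ℝ) : ℝ :=
  ∑ r, ∑ p, (phi (dot (w r) (X p)) - phi (-(dot (w r) (X p))))

/-- The concentration event `E` of the paper, i.e. properties (P1)–(P8), stated for
training patches `x`, initialization `w0`, labels `y` and signal-patch indices `sig`. -/
def EventEOn (N m P d : ℕ) (hd : 0 < d) (sigman sigma0 delta : ℝ)
    (y : Fin N → ℝ) (sig : Fin N → Fin P)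
    (x : Fin N → Fin P → Fin d → ℝ) (w0 : Fin m → Fin d → ℝ) : Prop :=
  -- (P1) noise-patch norms
  (∀ i j, j ≠ sig i →
      sigman ^ 2 * d / 2 ≤ sqnorm (x i j) ∧ sqnorm (x i j) ≤ 3 * sigman ^ 2 * d / 2) ∧
  -- (P2) pairwise noise inner products
  (∀ i k j q, j ≠ sig i → q ≠ sig k → ((i, j) : Fin N × Fin P) ≠ (k, q) →
      |dot (x i j) (x k q)| ≤
        2 * sigman ^ 2 * Real.sqrt ((d : ℝ) * Real.log ((16 : ℝ) * N ^ 2 * P ^ 2 / delta))) ∧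
  -- (P3) sup-norm of noise patches
  (∀ i j, j ≠ sig i → ∀ kk : Fin d,
      |x i j kk| ≤ sigman * Real.sqrt (2 * Real.log ((16 : ℝ) * d * N * P / delta))) ∧
  -- (P4) initialization norms
  (∀ r, Real.sqrt (sqnorm (w0 r)) ≤ 2 * sigma0 * Real.sqrt d) ∧
  -- (P5) initialization signal correlation
  (∀ r, |dot (w0 r) (e1 d hd)| ≤ sigma0 * Real.sqrt (2 * Real.log ((16 : ℝ) * m / delta))) ∧
  -- (P6) initialization noise correlations
  (∀ r i j, j ≠ sig i →
      |dot (w0 r) (x i j)| ≤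
        2 * sigma0 * sigman * Real.sqrt ((d : ℝ) * Real.log ((16 : ℝ) * N * m * P / delta))) ∧
  -- (P7) maximal initial signal alignment
  (∃ r, sigma0 / 2 ≤ dot (w0 r) (e1 d hd)) ∧
  -- (P8) maximal initial noise alignment
  (∀ i j, j ≠ sig i → ∃ r, sigma0 * sigman * Real.sqrt d / 4 ≤ y i * dot (w0 r) (x i j))
structure Setting where
  N : ℕ
  m : ℕ
  P : ℕ
  d : ℕ
  T : ℕ
  hN : 0 < N
  hm : 0 < m
  hP : 0 < P
  hd : 0 < d
  alpha : ℝ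
  sigman : ℝ
  sigma0 : ℝ
  eta : ℝ
  eps : ℝ
  delta : ℝ
  halpha : 0 < alpha
  hsigman : 0 < sigman
  hsigma0 : 0 < sigma0
  heta : 0 < eta
  heps : 0 < eps
  hepsalpha : eps < alpha
  hdelta0 : 0 < delta
  hdelta1 : delta < 1
  /-- labels -/
  y : Fin N → ℝ
  hy : ∀ i, y i = 1 ∨ y i = -1
  /-- signal patch index -/
  sig : Fin N → Fin P
  /-- learnable samples -/
  SL : Finset (Fin N)
  /-- unlearnable samples -/
  SU : Finset (Fin N)
  hunion : SL ∪ SU = Finset.univ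
  hdisj : Disjoint SL SU
  /-- training patches -/
  x : Fin N → Fin P → Fin d → ℝ
  hsigL : ∀ i ∈ SL, x i (sig i) = (alpha * y i) • e1 d hd
  hsigU : ∀ i ∈ SU, x i (sig i) = (alpha * y i) • eLast d hd
  hnoiseU : ∀ i j, j ≠ sig i → dot (x i j) (e1 d hd) = 0
  hnoiseV : ∀ i j, j ≠ sig i → dot (x i j) (eLast d hd) = 0
  /-- weight trajectory -/
  w : ℕ → Fin m → Fin d → ℝ
  hwperp : ∀ t r, dot (w t r) (eLast d hd) = 0
  /-- adversarial training examples at each iteration -/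
  xadv : ℕ → Fin N → Fin P → Fin d → ℝ
  hadvnoise : ∀ t i j, j ≠ sig i → xadv t i j = x i j
  hadvspan : ∀ t i, ∃ c : ℝ, xadv t i (sig i) - x i (sig i) = c • x i (sig i)
  hadvlinf : ∀ t i p k, |xadv t i p k - x i p k| ≤ eps
  hadvlearn : ∀ t : ℕ, ∀ i ∈ SL,
    alpha - eps ≤ y i * dot (xadv t i (sig i)) (e1 d hd) ∧
      y i * dot (xadv t i (sig i)) (e1 d hd) ≤ alpha

namespace Setting

variable (S : Setting)

/-- Adversarial margin `y_i f_{W^{(t)}}(X̃_i^{(t)})`. -/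
def marg (t : ℕ) (i : Fin S.N) : ℝ := S.y i * netOut (S.w t) (S.xadv t i)

/-- Signal coordinate `w_{r,1}^{(t)}`. -/
def wsig (t : ℕ) (r : Fin S.m) : ℝ := S.w t r ⟨0, S.hd⟩

/-- Unlearnable fraction `p_un = |S_U|/N`. -/
def pun : ℝ := (S.SU.card : ℝ) / S.N

/-- The adversarial-training gradient-descent dynamics. -/
def ATDyn : Prop :=
  ∀ t r, S.w (t + 1) r = S.w t r +
    (3 * S.eta / S.N) •
      ∑ i : Fin S.N, (psi (S.marg t i) * S.y i) •
        ∑ p : Fin S.P, (dot (S.w t r) (S.xadv t i p)) ^ 2 • S.xadv t i p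

/-- The signed gradient weight of sample `i` at iteration `t` under adversarial
distillation from teacher logits `fT`. -/
def gAD (fT : Fin S.N → ℝ) (t : ℕ) (i : Fin S.N) : ℝ :=
  sigm (S.y i * fT i) * psi (S.marg t i) - sigm (-(S.y i * fT i)) * psi (-(S.marg t i))

/-- The adversarial-distillation gradient-descent dynamics. -/
def ADDyn (fT : Fin S.N → ℝ) : Prop :=
  ∀ t r, S.w (t + 1) r = S.w t r +
    (3 * S.eta / S.N) •
      ∑ i : Fin S.N, (S.gAD fT t i * S.y i) •
        ∑ p : Fin S.P, (dot (S.w t r) (S.xadv t i p)) ^ 2 • S.xadv t i p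

/-- Noise coefficients `ρ_{i,j,r}^{(t)}` (adversarial training). -/
def rho (i : Fin S.N) (j : Fin S.P) (r : Fin S.m) : ℕ → ℝ
  | 0 => 0
  | t + 1 => rho i j r t + (3 * S.eta / S.N) * psi (S.marg t i) * (dot (S.w t r) (S.x i j)) ^ 2

/-- Noise coefficients under adversarial distillation. -/
def rhoAD (fT : Fin S.N → ℝ) (i : Fin S.N) (j : Fin S.P) (r : Fin S.m) : ℕ → ℝ
  | 0 => 0
  | t + 1 => rhoAD fT i j r t + (3 * S.eta / S.N) * S.gAD fT t i * (dot (S.w t r) (S.x i j)) ^ 2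

/-- The event `E` for a setting. -/
def EventE : Prop :=
  EventEOn S.N S.m S.P S.d S.hd S.sigman S.sigma0 S.delta S.y S.sig S.x (S.w 0)

/-- Condition (H): the parameter requirements of Condition 4.1 of the paper
(without the unlearnable-fraction regime item, which is imposed separately). -/
def CondH (C : ℝ) : Prop :=
  1 ≤ C ∧
  -- training horizon
  C * S.N / (S.eta * S.sigma0 * S.sigman ^ 3 * ((S.d : ℝ) * Real.sqrt S.d)) ≤ (S.T : ℝ) ∧
  -- dimension
  C * S.m ^ 2 * S.P ^ 2 * S.N ^ 2 *
      (Real.log ((S.T : ℝ) * S.N * S.m * S.P / S.delta)) ^ 4 ≤ (S.d : ℝ) ∧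
  -- signal strength
  C * S.sigman * Real.sqrt S.d * Real.log ((S.T : ℝ) * S.N * S.m * S.P / S.delta) /
      (((S.N : ℝ) * (1 - S.pun)) ^ ((1 : ℝ) / 3)) ≤ S.alpha ∧
  -- initialization scale
  S.sigma0 ≤
    C⁻¹ *
        min (min (1 / ((S.m : ℝ) ^ ((2 : ℝ) / 3) * (S.P : ℝ) ^ ((2 : ℝ) / 3) *
            S.sigman * Real.sqrt S.d))
          (1 / (S.alpha * (S.m : ℝ) ^ ((2 : ℝ) / 3))))
          (1 / (S.sigman * S.m ^ 2 * Real.sqrt S.P * S.d)) /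
      Real.log ((S.T : ℝ) * S.d * S.N * S.m * S.P / S.delta) ∧
  -- learning rate
  S.eta ≤
    C⁻¹ * min (min (1 / (S.alpha ^ 3 * S.sigma0)) (1 / (S.sigman ^ 2 * S.d))) (1 / S.alpha ^ 2) /
      Real.log ((S.T : ℝ) * S.N * S.m * S.P / S.delta) ∧
  -- adversarial budget
  C * S.sigman * S.m * Real.sqrt S.P * Real.log ((S.T : ℝ) * S.d * S.N * S.P / S.delta) ≤ S.eps ∧
  S.eps < C⁻¹ * min S.alpha (1 / (S.m * S.sigma0 * S.d)) ∧
  -- width and number of patches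
  C * Real.log ((S.N : ℝ) * S.P / S.delta) ≤ (S.m : ℝ) ∧
  (S.m : ℝ) ≤ C * Real.log S.d ^ C ∧
  2 ≤ S.P ∧ (S.P : ℝ) ≤ C

/-- The sparse-unlearnable regime of Condition 4.1. -/
def SparseRegime (C : ℝ) : Prop :=
  C / S.N ≤ S.pun ∧ S.pun ≤ C⁻¹ * Real.log S.d / S.N ∧
  C * S.m * S.P * Real.log ((S.T : ℝ) * S.d * S.N * S.m * S.P / S.delta) ≤ (S.N : ℝ)

/-- The noise-stability bound (NS) on learnable samples at iteration `t`. -/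
def NS (t : ℕ) : Prop :=
  ∀ r : Fin S.m, ∀ i ∈ S.SL, ∀ j, j ≠ S.sig i →
    |dot (S.w t r) (S.x i j)| ≤
      3 * S.sigma0 * S.sigman *
          Real.sqrt ((S.d : ℝ) * Real.log ((16 : ℝ) * S.N * S.m * S.P / S.delta)) +
        21 * S.pun * S.N * S.P * Real.log S.T ^ ((1 : ℝ) / 3) / Real.sqrt S.d *
          Real.sqrt (Real.log ((16 : ℝ) * S.N ^ 2 * S.P ^ 2 / S.delta))

/-- The signal-learning hitting time `T₀`. -/
def T0 (C0 : ℝ) : ℕ :=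
  sInf {t : ℕ | ∃ r, C0 / (S.alpha * (S.m : ℝ) ^ ((1 : ℝ) / 3)) < S.wsig t r}

/-- Maximum of the noise coefficients over unlearnable noise patches. -/
def rhoMaxSU (t : ℕ) : ℝ :=
  sSup {z : ℝ | ∃ r : Fin S.m, ∃ k ∈ S.SU, ∃ q, q ≠ S.sig k ∧ z = S.rho k q r t}

/-- Shifted noise coefficients `ρ̂_{i,j,r}^{(t)}`. -/
def rhoHat (i : Fin S.N) (j : Fin S.P) (r : Fin S.m) (t : ℕ) : ℝ :=
  S.rho i j r t + S.y i * dot (S.w 0 r) (S.x i j) / sqnorm (S.x i j)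

/-- Maximum shifted noise coefficient over unlearnable noise patches. -/
def rhoHatMax (t : ℕ) : ℝ :=
  sSup {z : ℝ | ∃ r : Fin S.m, ∃ k ∈ S.SU, ∃ q, q ≠ S.sig k ∧ z = S.rhoHat k q r t}

/-- The noise-memorization hitting time `T₁`. -/
def T1 (C1 : ℝ) : ℕ :=
  sInf {t : ℕ | C1 / (((S.m : ℝ) * S.P) ^ ((1 : ℝ) / 3) * S.sigman ^ 2 * S.d) < S.rhoHatMax t}

/-- The Good-Teacher horizon `T_max`. -/
def Tmax : ℝ :=
  S.N / (1000 * S.eta * S.m * S.P * S.sigma0 ^ 4 * S.sigman ^ 6 * (S.d : ℝ) ^ 3 *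
    Real.log ((16 : ℝ) * S.N * S.m * S.P / S.delta) ^ 2)

end Setting

/-!
The adversarial margin of a sample is the sum of a signal term (present only on learnable samples)
and of cubes of noise responses, and on the event `E` the noise response
`y_i ⟨w_r^{(t)}, x_{i,j}⟩` equals `ρ̂_{i,j,r}^{(t)} ‖x_{i,j}‖²` up to cross terms, which the
dimension condition makes negligible as long as no `σ_n² d ρ` exceeds the order `log^{1/3}(TNmP/δ)`.
That coarse bound holds up to time `T`, since a larger noise response would make `ψ` of its margin
smaller than `1/T`.

During the first `N / (76800 log^{3/2} · η σ₀ σ_n³ d^{3/2})` steps the quadratic recursion keeps all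
noise responses at their initial size. The signal, driven by a comparable recursion with much larger
gain, passes the level of `T₀` within these steps and fits the learnable samples, whose weights `ψ`
stay small afterwards. From then on only the unlearnable samples, which receive no signal, drive
noise growth: until memorization their `ψ` is at least `ψ(4C₁³)`, so the largest shifted
coefficient `a` of a filter satisfies `a⁺ ≥ a + κ a²` and reaches the threshold in time of order
`1 / (κ a₀)`. Monotonicity of `ρ̂` makes the memorized response persist.
-/

section Elementary

variable {d : ℕ}

lemma dot_comm (a b : Fin d → ℝ) : dot a b = dot b a := dotProduct_comm a b

lemma dot_add_left (a b c : Fin d → ℝ) : dot (a + b) c = dot a c + dot b c :=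
  add_dotProduct a b c

lemma dot_smul_left (s : ℝ) (a c : Fin d → ℝ) : dot (s • a) c = s * dot a c :=
  smul_dotProduct s a c

lemma dot_smul_right (s : ℝ) (a c : Fin d → ℝ) : dot a (s • c) = s * dot a c :=
  dotProduct_smul s a c

lemma dot_sum_left {ι : Type*} (s : Finset ι) (f : ι → Fin d → ℝ) (c : Fin d → ℝ) :
    dot (∑ i ∈ s, f i) c = ∑ i ∈ s, dot (f i) c :=
  sum_dotProduct s f c

lemma dot_e1 (hd : 0 < d) (a : Fin d → ℝ) : dot a (e1 d hd) = a ⟨0, hd⟩ := by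
  simp [dot, e1]

lemma phi_sub_phi_neg (z : ℝ) : phi z - phi (-z) = z ^ 3 := by
  unfold phi
  rcases le_total 0 z with h | h
  · rw [max_eq_right h, max_eq_left (neg_nonpos.2 h)]; ring
  · rw [max_eq_left h, max_eq_right (neg_nonneg.2 h)]; ring

lemma psi_eq_sigmoid_neg (z : ℝ) : psi z = Real.sigmoid (-z) := by
  rw [psi, Real.sigmoid_def, neg_neg, one_div]

lemma psi_pos (z : ℝ) : 0 < psi z := psi_eq_sigmoid_neg z ▸ Real.sigmoid_pos _

lemma psi_le_one (z : ℝ) : psi z ≤ 1 := psi_eq_sigmoid_neg z ▸ Real.sigmoid_le_one _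

lemma psi_antitone : Antitone psi := fun a b h => by
  rw [psi_eq_sigmoid_neg, psi_eq_sigmoid_neg]
  exact Real.sigmoid_le (neg_le_neg h)

lemma psi_le_exp_neg (z : ℝ) : psi z ≤ Real.exp (-z) := by
  rw [psi, Real.exp_neg, ← one_div]
  exact one_div_le_one_div_of_le (Real.exp_pos z) (by linarith)

lemma lt_log_of_one_div_lt_psi {z K : ℝ} (hK : 0 < K) (h : 1 / K < psi z) : z < Real.log K := by
  have hexp := h.trans_le (psi_le_exp_neg z)
  rw [Real.exp_neg, ← one_div, one_div_lt_one_div hK (Real.exp_pos z)] at hexp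
  exact (Real.lt_log_iff_exp_lt hK).2 hexp

lemma one_add_exp_two_mul_log_add_three_le {z : ℝ} (hz : 1 ≤ z) :
    1 + Real.exp (2 * Real.log z + 3) ≤ 22 * z ^ 2 := by
  have hexp3 : Real.exp 3 ≤ 21 := by
    calc Real.exp 3 = Real.exp 1 ^ 3 := by rw [← Real.exp_nat_mul]; norm_num
      _ ≤ 2.7182818286 ^ 3 := by gcongr; exact Real.exp_one_lt_d9.le
      _ ≤ 21 := by norm_num
  have hz0 : 0 < z := by linarith
  rw [Real.exp_add, two_mul, Real.exp_add, Real.exp_log hz0, ← sq]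
  nlinarith [mul_le_mul_of_nonneg_left hexp3 (sq_nonneg z)]

lemma rpow_one_third_pow_three {z : ℝ} (hz : 0 ≤ z) : (z ^ ((1 : ℝ) / 3)) ^ 3 = z := by
  simpa using Real.rpow_inv_natCast_pow hz three_ne_zero

lemma rpow_one_third_sq {z : ℝ} (hz : 0 ≤ z) : (z ^ ((1 : ℝ) / 3)) ^ 2 = z ^ ((2 : ℝ) / 3) := by
  rw [← Real.rpow_mul_natCast hz]
  norm_num

lemma rpow_three_halves {z : ℝ} (hz : 0 ≤ z) : z ^ ((3 : ℝ) / 2) = z * √z := by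
  rw [Real.sqrt_eq_rpow, ← Real.rpow_one_add' hz (by norm_num)]
  norm_num

lemma pos_of_pos_of_le_div {x a b : ℝ} (hx : 0 < x) (ha : 0 ≤ a) (h : x ≤ a / b) : 0 < b := by
  by_contra! hb
  exact (hx.trans_le h).not_ge (div_nonpos_of_nonneg_of_nonpos ha hb)

lemma mul_mul_le_of_le_inv_mul_div {C x a b : ℝ} (hC : 0 < C) (hb : 0 < b) (h : x ≤ C⁻¹ * a / b) :
    C * (x * b) ≤ a :=
  (le_inv_mul_iff₀ hC).1 ((le_div_iff₀ hb).1 h)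

lemma odd_three : Odd 3 := by decide

section OddPowers

variable {R ι : Type*} [CommRing R] [LinearOrder R] [IsStrictOrderedRing R]
  {s : Finset ι} {z : ι → R} {b : R} {n : ℕ}

lemma neg_card_mul_pow_le_sum_pow (hn : Odd n) (hz : ∀ i ∈ s, -b ≤ z i) :
    -(s.card * b ^ n) ≤ ∑ i ∈ s, z i ^ n := by
  have h := s.card_nsmul_le_sum _ _ fun i hi => hn.pow_le_pow.2 (hz i hi)
  rwa [hn.neg_pow, nsmul_eq_mul, mul_neg] at h

lemma sum_pow_le_card_mul_pow (hn : Odd n) (hz : ∀ i ∈ s, z i ≤ b) :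
    ∑ i ∈ s, z i ^ n ≤ s.card * b ^ n := by
  rw [← nsmul_eq_mul]
  exact s.sum_le_card_nsmul _ _ fun i hi => hn.pow_le_pow.2 (hz i hi)

lemma pow_sub_card_mul_pow_le_sum_pow (hn : Odd n) (hb : 0 ≤ b) (hz : ∀ i ∈ s, -b ≤ z i)
    {i₀ : ι} (hi₀ : i₀ ∈ s) :
    z i₀ ^ n - s.card * b ^ n ≤ ∑ i ∈ s, z i ^ n := by
  classical
  have hrest := neg_card_mul_pow_le_sum_pow (s := s.erase i₀) hn
    fun i hi => hz i (mem_of_mem_erase hi)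
  have hcard : ((s.erase i₀).card : R) * b ^ n ≤ s.card * b ^ n := by
    gcongr
    exact erase_subset _ _
  rw [← add_sum_erase s _ hi₀]
  linarith

end OddPowers

section QuadraticGrowth

variable {𝕜 : Type*} [Field 𝕜] [LinearOrder 𝕜] [IsStrictOrderedRing 𝕜]

lemma one_div_add_mul_sq_le {a c : 𝕜} (ha : 0 < a) (hc : 0 < c) (h : c * a ≤ 1) :
    1 / (a + c * a ^ 2) ≤ 1 / a - c / 2 := by
  have hgap : 1 / a - c / 2 - 1 / (a + c * a ^ 2) = c * (1 - c * a) / (2 * (1 + c * a)) := by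
    have : 1 + c * a ≠ 0 := by positivity
    have : a + c * a ^ 2 ≠ 0 := by positivity
    field_simp
    ring
  have : 0 ≤ c * (1 - c * a) / (2 * (1 + c * a)) :=
    div_nonneg (mul_nonneg hc.le (sub_nonneg.2 h)) (by positivity)
  linarith

lemma mul_mul_lt_two_of_quadratic_growth {a : ℕ → 𝕜} {c : 𝕜} {n : ℕ} (hc : 0 < c)
    (h0 : 0 < a 0) (hgrow : ∀ t < n, a t + c * a t ^ 2 ≤ a (t + 1))
    (hle : ∀ t < n, c * a t ≤ 1) :
    n * c * a 0 < 2 := by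
  have hinv : ∀ t ≤ n, 0 < a t ∧ 1 / a t ≤ 1 / a 0 - t * (c / 2) := by
    intro t
    induction t with
    | zero => exact fun _ => ⟨h0, by simp⟩
    | succ t ih =>
      intro ht
      obtain ⟨hpos, hbound⟩ := ih (by lia)
      have hpos' : 0 < a t + c * a t ^ 2 := by positivity
      have hstep := hgrow t (by lia)
      refine ⟨hpos'.trans_le hstep, ?_⟩
      have := one_div_le_one_div_of_le hpos' hstep
      have := one_div_add_mul_sq_le hpos hc (hle t (by lia))
      push_cast
      linarith
  obtain ⟨hpos, hbound⟩ := hinv n le_rfl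
  have hlt : n * (c / 2) < 1 / a 0 := by linarith [one_div_pos.2 hpos]
  rw [lt_div_iff₀ h0] at hlt
  linarith

end QuadraticGrowth

end Elementary

namespace Setting

/-! ### Margins and updates -/

section Dynamics

variable (S : Setting)

/-- The signed noise response `y_i ⟨w_r^{(t)}, x_{i,j}⟩`. -/
def resp (t : ℕ) (i : Fin S.N) (j : Fin S.P) (r : Fin S.m) : ℝ :=
  S.y i * dot (S.w t r) (S.x i j)

/-- The signed size along `e₁` of the adversarial signal patch of a learnable sample; it lies in
`[α - ε, α]`. -/
def advSignal (t : ℕ) (i : Fin S.N) : ℝ := S.y i * dot (S.xadv t i (S.sig i)) (e1 S.d S.hd)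

/-- The indices of the noise patches of sample `i`. -/
def noisePatches (i : Fin S.N) : Finset (Fin S.P) := univ.erase (S.sig i)

/-- The contribution of the noise patches to the margin of sample `i`. -/
def noiseMargin (t : ℕ) (i : Fin S.N) : ℝ := ∑ r, ∑ p ∈ S.noisePatches i, S.resp t i p r ^ 3

/-- The coefficient of `(w_{r,1}^{(t)})²` in the update of the signal coordinate. -/
def signalGain (t : ℕ) : ℝ :=
  (3 * S.eta / S.N) * ∑ i ∈ S.SL, psi (S.marg t i) * S.advSignal t i ^ 3

variable {S} {t : ℕ} {i : Fin S.N} {j : Fin S.P} {r : Fin S.m}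

lemma mem_noisePatches : j ∈ S.noisePatches i ↔ j ≠ S.sig i := by simp [noisePatches]

lemma card_noisePatches_le (i : Fin S.N) : #(S.noisePatches i) ≤ S.P := by
  simp [noisePatches]

lemma sum_patches (i : Fin S.N) {M : Type*} [AddCommMonoid M] (f : Fin S.P → M) :
    ∑ p, f p = f (S.sig i) + ∑ p ∈ S.noisePatches i, f p :=
  (add_sum_erase _ f (mem_univ _)).symm

lemma mem_SL_or_mem_SU (i : Fin S.N) : i ∈ S.SL ∨ i ∈ S.SU :=
  mem_union.1 (S.hunion ▸ mem_univ i)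

lemma y_mul_self (i : Fin S.N) : S.y i * S.y i = 1 := by
  rcases S.hy i with h | h <;> simp [h]

lemma abs_y (i : Fin S.N) : |S.y i| = 1 := by
  rcases S.hy i with h | h <;> simp [h]

lemma y_mul_pow_three (i : Fin S.N) (z : ℝ) : S.y i * z ^ 3 = (S.y i * z) ^ 3 := by
  linear_combination (-S.y i * z ^ 3) * y_mul_self i

lemma resp_sq (t : ℕ) (i : Fin S.N) (j : Fin S.P) (r : Fin S.m) :
    S.resp t i j r ^ 2 = dot (S.w t r) (S.x i j) ^ 2 := by
  rw [resp, mul_pow, sq (S.y i), y_mul_self, one_mul]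

lemma xadv_sig (t : ℕ) (hi : i ∈ S.SL) :
    S.xadv t i (S.sig i) = (S.y i * S.advSignal t i) • e1 S.d S.hd := by
  obtain ⟨c, hc⟩ := S.hadvspan t i
  have hscale : S.xadv t i (S.sig i) = ((1 + c) * (S.alpha * S.y i)) • e1 S.d S.hd := by
    rw [eq_add_of_sub_eq hc, S.hsigL i hi, smul_smul, ← add_smul, one_add_mul, add_comm]
  have hunit : dot (e1 S.d S.hd) (e1 S.d S.hd) = 1 := by simp [dot_e1, e1]
  rw [advSignal, ← mul_assoc, y_mul_self, one_mul, hscale, dot_smul_left, hunit, mul_one]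

lemma dot_w_xadv_sig (t : ℕ) (hi : i ∈ S.SL) (r : Fin S.m) :
    dot (S.w t r) (S.xadv t i (S.sig i)) = S.y i * (S.advSignal t i * S.wsig t r) := by
  rw [xadv_sig t hi, dot_smul_right, dot_e1, wsig, mul_assoc]

lemma dot_w_xadv_sig_eq_zero (t : ℕ) (hi : i ∈ S.SU) (r : Fin S.m) :
    dot (S.w t r) (S.xadv t i (S.sig i)) = 0 := by
  obtain ⟨c, hc⟩ := S.hadvspan t i
  rw [eq_add_of_sub_eq hc, S.hsigU i hi, smul_smul, ← add_smul, dot_smul_right, S.hwperp, mul_zero]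

lemma marg_eq_sum_add_noiseMargin (t : ℕ) (i : Fin S.N) :
    S.marg t i = ∑ r, (S.y i * dot (S.w t r) (S.xadv t i (S.sig i))) ^ 3 +
      S.noiseMargin t i := by
  rw [marg, netOut, mul_sum, noiseMargin, ← sum_add_distrib]
  refine sum_congr rfl fun r _ => ?_
  simp only [phi_sub_phi_neg]
  rw [sum_patches i, mul_add, y_mul_pow_three, mul_sum]
  congr 1
  refine sum_congr rfl fun p hp => ?_
  rw [S.hadvnoise t i p (mem_noisePatches.1 hp), resp, y_mul_pow_three]

lemma marg_of_mem_SL (t : ℕ) (hi : i ∈ S.SL) :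
    S.marg t i = S.advSignal t i ^ 3 * ∑ r, S.wsig t r ^ 3 + S.noiseMargin t i := by
  simp only [marg_eq_sum_add_noiseMargin, dot_w_xadv_sig t hi, ← mul_assoc, y_mul_self, one_mul,
    mul_pow, mul_sum]

lemma marg_of_mem_SU (t : ℕ) (hi : i ∈ S.SU) : S.marg t i = S.noiseMargin t i := by
  simp [marg_eq_sum_add_noiseMargin, dot_w_xadv_sig_eq_zero t hi]

lemma dot_w_succ (hdyn : S.ATDyn) (t : ℕ) (r : Fin S.m) (c : Fin S.d → ℝ) :
    dot (S.w (t + 1) r) c = dot (S.w t r) c + (3 * S.eta / S.N) * ∑ i, psi (S.marg t i) * S.y i *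
      (dot (S.w t r) (S.xadv t i (S.sig i)) ^ 2 * dot (S.xadv t i (S.sig i)) c +
        ∑ p ∈ S.noisePatches i, dot (S.w t r) (S.x i p) ^ 2 * dot (S.x i p) c) := by
  rw [hdyn t r, dot_add_left, dot_smul_left, dot_sum_left]
  congr 2
  refine sum_congr rfl fun i _ => ?_
  rw [dot_smul_left, dot_sum_left, sum_patches i, dot_smul_left]
  congr 2
  refine sum_congr rfl fun p hp => ?_
  rw [S.hadvnoise t i p (mem_noisePatches.1 hp), dot_smul_left]

lemma wsig_succ (hdyn : S.ATDyn) (t : ℕ) (r : Fin S.m) :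
    S.wsig (t + 1) r = S.wsig t r + S.signalGain t * S.wsig t r ^ 2 := by
  have hterm (i : Fin S.N) : psi (S.marg t i) * S.y i *
      (dot (S.w t r) (S.xadv t i (S.sig i)) ^ 2 * dot (S.xadv t i (S.sig i)) (e1 S.d S.hd) +
        ∑ p ∈ S.noisePatches i, dot (S.w t r) (S.x i p) ^ 2 * dot (S.x i p) (e1 S.d S.hd)) =
      psi (S.marg t i) * S.advSignal t i * dot (S.w t r) (S.xadv t i (S.sig i)) ^ 2 := by
    rw [sum_eq_zero fun p hp => by rw [S.hnoiseU i p (mem_noisePatches.1 hp), mul_zero], advSignal]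
    ring
  have hSL : ∀ i ∈ S.SL, psi (S.marg t i) * S.advSignal t i *
      dot (S.w t r) (S.xadv t i (S.sig i)) ^ 2 =
      psi (S.marg t i) * S.advSignal t i ^ 3 * S.wsig t r ^ 2 := fun i hi => by
    rw [dot_w_xadv_sig t hi, mul_pow, sq (S.y i), y_mul_self]
    ring
  have hSU : ∀ i ∈ S.SU, psi (S.marg t i) * S.advSignal t i *
      dot (S.w t r) (S.xadv t i (S.sig i)) ^ 2 = 0 := fun i hi => by
    rw [dot_w_xadv_sig_eq_zero t hi, zero_pow two_ne_zero, mul_zero]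
  have hupdate := dot_w_succ hdyn t r (e1 S.d S.hd)
  rw [sum_congr rfl fun i _ => hterm i, ← S.hunion, sum_union S.hdisj, sum_congr rfl hSL,
    sum_eq_zero hSU, add_zero, ← sum_mul, dot_e1, dot_e1, ← mul_assoc] at hupdate
  exact hupdate

lemma signal_term_dot_noise (t : ℕ) (r : Fin S.m) (k : Fin S.N) (hj : j ≠ S.sig i) :
    dot (S.w t r) (S.xadv t k (S.sig k)) ^ 2 * dot (S.xadv t k (S.sig k)) (S.x i j) = 0 := by
  rcases mem_SL_or_mem_SU k with hk | hk
  · rw [xadv_sig t hk, dot_smul_left, dot_comm (e1 _ _), S.hnoiseU i j hj, mul_zero, mul_zero]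
  · rw [dot_w_xadv_sig_eq_zero t hk, zero_pow two_ne_zero, zero_mul]

lemma dot_w_noise (hdyn : S.ATDyn) (t : ℕ) (hj : j ≠ S.sig i) (r : Fin S.m) :
    dot (S.w t r) (S.x i j) = dot (S.w 0 r) (S.x i j) +
      ∑ k, ∑ q ∈ S.noisePatches k, S.y k * S.rho k q r t * dot (S.x k q) (S.x i j) := by
  induction t with
  | zero => simp [rho]
  | succ t ih =>
    rw [dot_w_succ hdyn, ih, add_assoc, mul_sum, ← sum_add_distrib]
    congr 1
    refine sum_congr rfl fun k _ => ?_
    rw [signal_term_dot_noise t r k hj, zero_add, mul_sum, mul_sum, ← sum_add_distrib]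
    refine sum_congr rfl fun q _ => ?_
    rw [rho]
    ring

lemma rho_succ (i : Fin S.N) (j : Fin S.P) (r : Fin S.m) (t : ℕ) :
    S.rho i j r (t + 1) =
      S.rho i j r t + (3 * S.eta / S.N) * psi (S.marg t i) * S.resp t i j r ^ 2 := by
  rw [resp_sq, rho]

lemma three_mul_eta_div_N_pos (S : Setting) : 0 < 3 * S.eta / S.N :=
  div_pos (by linarith [S.heta]) (Nat.cast_pos.2 S.hN)

lemma rho_mono (i : Fin S.N) (j : Fin S.P) (r : Fin S.m) : Monotone (S.rho i j r) :=
  monotone_nat_of_le_succ fun t => by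
    have := S.three_mul_eta_div_N_pos
    have := psi_pos (S.marg t i)
    rw [rho_succ]
    exact le_add_of_nonneg_right (by positivity)

lemma rho_nonneg (i : Fin S.N) (j : Fin S.P) (r : Fin S.m) (t : ℕ) : 0 ≤ S.rho i j r t :=
  rho_mono i j r (Nat.zero_le t)

lemma rhoHat_mono (i : Fin S.N) (j : Fin S.P) (r : Fin S.m) : Monotone (S.rhoHat i j r) :=
  (rho_mono i j r).add_const _

lemma alpha_sub_eps_le_advSignal (t : ℕ) (hi : i ∈ S.SL) : S.alpha - S.eps ≤ S.advSignal t i :=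
  (S.hadvlearn t i hi).1

lemma advSignal_le_alpha (t : ℕ) (hi : i ∈ S.SL) : S.advSignal t i ≤ S.alpha :=
  (S.hadvlearn t i hi).2

lemma advSignal_pos (t : ℕ) (hi : i ∈ S.SL) : 0 < S.advSignal t i :=
  (sub_pos.2 S.hepsalpha).trans_le (alpha_sub_eps_le_advSignal t hi)

lemma signalGain_nonneg (t : ℕ) : 0 ≤ S.signalGain t :=
  mul_nonneg S.three_mul_eta_div_N_pos.le <| sum_nonneg fun _ hi =>
    mul_nonneg (psi_pos _).le (pow_nonneg (advSignal_pos t hi).le 3)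

lemma wsig_mono (hdyn : S.ATDyn) (r : Fin S.m) : Monotone fun t => S.wsig t r :=
  monotone_nat_of_le_succ fun t => by
    have := signalGain_nonneg (S := S) t
    rw [wsig_succ hdyn]
    exact le_add_of_nonneg_right (by positivity)

end Dynamics

variable {S : Setting}

/-! ### Scales -/

section Scales

variable (S : Setting)

/-- The typical squared norm `σ_n² d` of a noise patch. -/
def noiseSq : ℝ := S.sigman ^ 2 * S.d

/-- The bound (P2) on inner products of distinct noise patches. -/
def crossBound : ℝ :=
  2 * S.sigman ^ 2 * √((S.d : ℝ) * Real.log ((16 : ℝ) * S.N ^ 2 * S.P ^ 2 / S.delta))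

/-- The confidence logarithm `log(16NmP/δ)`. -/
def logConf : ℝ := Real.log ((16 : ℝ) * S.N * S.m * S.P / S.delta)

/-- The horizon logarithm `log(TNmP/δ)`. -/
def logHorizon : ℝ := Real.log ((S.T : ℝ) * S.N * S.m * S.P / S.delta)

/-- The cube root of `log(TNmP/δ)`, the largest size a noise response can reach before its sample
stops contributing gradient. -/
def cbrtLog : ℝ := S.logHorizon ^ ((1 : ℝ) / 3)

/-- The bound (P6) on the initial noise responses. -/
def initNoise : ℝ := 2 * S.sigma0 * S.sigman * √((S.d : ℝ) * S.logConf)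

/-- The bound (P5) on the initial signal coordinates. -/
def initSignal : ℝ := S.sigma0 * √(2 * Real.log ((16 : ℝ) * S.m / S.delta))

/-- The cube root of `mP`. -/
def cbrtMP : ℝ := ((S.m : ℝ) * S.P) ^ ((1 : ℝ) / 3)

/-- The cube root of `m`. -/
def cbrtM : ℝ := (S.m : ℝ) ^ ((1 : ℝ) / 3)

/-- The noise-memorization time scale `N / (η σ₀ σ_n³ d^{3/2})`. -/
def timeScale : ℝ := S.N / (S.eta * S.sigma0 * S.sigman ^ 3 * ((S.d : ℝ) * √S.d))

/-- The separation of scales on which the analysis of the dynamics rests: everything that has to be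
negligible is so up to the small constant `ζ` or the large constant `C`. -/
structure WellScaled (ζ C : ℝ) : Prop where
  zeta_pos : 0 < ζ
  zeta_le : ζ ≤ 1 / 2500
  le_const : 2000 ≤ C
  const_mul_zeta : 2 ≤ C * ζ
  one_le_logConf : 1 ≤ S.logConf
  logConf_le : S.logConf ≤ S.logHorizon
  two_le_logHorizon : 2 ≤ S.logHorizon
  T_pos : 0 < S.T
  exp_neg_le : Real.exp (-S.logHorizon) ≤ 1 / S.T
  cross : S.N * S.P * S.crossBound * S.cbrtMP * S.logHorizon ≤ ζ * S.noiseSq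
  initNoise_small : C * S.initNoise * S.cbrtMP ≤ 2
  initSignal_small : C * (S.alpha * S.initSignal) * S.cbrtM ≤ 2
  eta_noise : C * (S.eta * S.noiseSq * S.logHorizon) ≤ 1
  eta_signal : C * (S.eta * S.alpha ^ 2 * S.logHorizon) ≤ 1
  signal_large :
    C ^ 3 * S.sigman ^ 3 * (S.d * √S.d) * S.logHorizon ^ 3 ≤ S.alpha ^ 3 * #S.SL
  eps_small : C * S.eps ≤ S.alpha
  SU_nonempty : S.SU.Nonempty
  SL_nonempty : S.SL.Nonempty
  two_le_P : 2 ≤ S.P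
  timeScale_large : 76800 * (S.logConf * √S.logConf) ≤ S.timeScale
  timeScale_le : C * S.timeScale ≤ S.T

lemma one_le_N : (1 : ℝ) ≤ S.N := Nat.one_le_cast.2 S.hN

lemma one_le_m : (1 : ℝ) ≤ S.m := Nat.one_le_cast.2 S.hm

lemma one_le_P : (1 : ℝ) ≤ S.P := Nat.one_le_cast.2 S.hP

lemma d_pos : (0 : ℝ) < S.d := Nat.cast_pos.2 S.hd

lemma one_le_d : (1 : ℝ) ≤ S.d := Nat.one_le_cast.2 S.hd

lemma noiseSq_pos : 0 < S.noiseSq := mul_pos (pow_pos S.hsigman 2) S.d_pos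

lemma crossBound_nonneg : 0 ≤ S.crossBound := by unfold crossBound; positivity

lemma initNoise_nonneg : 0 ≤ S.initNoise := by
  have := S.hsigman
  have := S.hsigma0
  unfold initNoise
  positivity

lemma initSignal_nonneg : 0 ≤ S.initSignal := by
  have := S.hsigma0
  unfold initSignal
  positivity

lemma timeScale_pos : 0 < S.timeScale := by
  have := S.heta
  have := S.hsigma0
  have := S.hsigman
  have := S.d_pos
  have := S.one_le_N
  unfold timeScale
  positivity

lemma one_le_cbrtMP : 1 ≤ S.cbrtMP :=
  Real.one_le_rpow (one_le_mul_of_one_le_of_one_le S.one_le_m S.one_le_P) (by norm_num)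

lemma cbrtMP_pow_three : S.cbrtMP ^ 3 = S.m * S.P := rpow_one_third_pow_three (by positivity)

lemma cbrtM_pow_three : S.cbrtM ^ 3 = S.m := rpow_one_third_pow_three (by positivity)

lemma one_le_cbrtM : 1 ≤ S.cbrtM := Real.one_le_rpow S.one_le_m (by norm_num)

end Scales

variable {ζ C b B : ℝ} {t : ℕ} {i : Fin S.N} {j : Fin S.P} {r : Fin S.m}

lemma WellScaled.one_le_sqrt_logConf (hW : S.WellScaled ζ C) : 1 ≤ √S.logConf :=
  Real.one_le_sqrt.2 hW.one_le_logConf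

lemma WellScaled.one_le_cbrtLog (hW : S.WellScaled ζ C) : 1 ≤ S.cbrtLog :=
  Real.one_le_rpow (by linarith [hW.two_le_logHorizon]) (by norm_num)

lemma WellScaled.cbrtLog_pow_three (hW : S.WellScaled ζ C) : S.cbrtLog ^ 3 = S.logHorizon :=
  rpow_one_third_pow_three (by linarith [hW.two_le_logHorizon])

lemma WellScaled.cbrtLog_le (hW : S.WellScaled ζ C) : S.cbrtLog ≤ S.logHorizon :=
  hW.cbrtLog_pow_three ▸ le_self_pow₀ hW.one_le_cbrtLog three_ne_zero

lemma WellScaled.cbrtLog_sq_le (hW : S.WellScaled ζ C) : S.cbrtLog ^ 2 ≤ S.logHorizon :=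
  hW.cbrtLog_pow_three ▸ pow_le_pow_right₀ hW.one_le_cbrtLog (by norm_num)

lemma WellScaled.initNoise_le (hW : S.WellScaled ζ C) : S.initNoise ≤ ζ / S.cbrtMP := by
  have hC : 0 < C := by linarith [hW.le_const]
  rw [le_div_iff₀ (one_pos.trans_le S.one_le_cbrtMP)]
  refine le_of_mul_le_mul_left ?_ hC
  rw [← mul_assoc]
  exact hW.initNoise_small.trans hW.const_mul_zeta

/-! ### Noise responses on the event `E` -/

lemma half_noiseSq_le_sqnorm (hE : S.EventE) (hj : j ≠ S.sig i) :
    S.noiseSq / 2 ≤ sqnorm (S.x i j) := (hE.1 i j hj).1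

lemma sqnorm_le_noiseSq (hE : S.EventE) (hj : j ≠ S.sig i) :
    sqnorm (S.x i j) ≤ 3 * S.noiseSq / 2 := by
  simpa only [noiseSq, mul_assoc] using (hE.1 i j hj).2

lemma sqnorm_pos (hE : S.EventE) (hj : j ≠ S.sig i) : 0 < sqnorm (S.x i j) :=
  (half_pos S.noiseSq_pos).trans_le (half_noiseSq_le_sqnorm hE hj)

lemma abs_resp_zero_le (hE : S.EventE) (hj : j ≠ S.sig i) (r : Fin S.m) :
    |S.resp 0 i j r| ≤ S.initNoise := by
  rw [resp, abs_mul, abs_y, one_mul]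
  exact hE.2.2.2.2.2.1 r i j hj

lemma neg_initSignal_le_wsig (hdyn : S.ATDyn) (hE : S.EventE) (t : ℕ) (r : Fin S.m) :
    -S.initSignal ≤ S.wsig t r := by
  have h := hE.2.2.2.2.1 r
  rw [dot_e1] at h
  exact (abs_le.1 h).1.trans (wsig_mono hdyn r (Nat.zero_le t))

lemma rhoHat_mul_sqnorm (hE : S.EventE) (hj : j ≠ S.sig i) (r : Fin S.m) (t : ℕ) :
    S.rhoHat i j r t * sqnorm (S.x i j) = S.resp 0 i j r + S.rho i j r t * sqnorm (S.x i j) := by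
  rw [rhoHat, add_mul, div_mul_cancel₀ _ (sqnorm_pos hE hj).ne', resp, add_comm]

lemma abs_cross_term_le (hE : S.EventE) (hj : j ≠ S.sig i) {k : Fin S.N} {q : Fin S.P}
    (hq : q ≠ S.sig k) (hne : (k, q) ≠ (i, j)) (hrho : S.rho k q r t ≤ b) :
    |S.y i * (S.y k * S.rho k q r t * dot (S.x k q) (S.x i j))| ≤ S.crossBound * b := by
  rw [abs_mul, abs_mul, abs_mul, abs_y, abs_y, one_mul, one_mul, mul_comm,
    abs_of_nonneg (rho_nonneg k q r t)]
  exact mul_le_mul (hE.2.1 k i q j hq hj hne) hrho (rho_nonneg k q r t) S.crossBound_nonneg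

lemma abs_resp_sub_rhoHat_mul_sqnorm_le (hdyn : S.ATDyn) (hE : S.EventE) (hb : 0 ≤ b)
    (hrho : ∀ k q, q ≠ S.sig k → S.rho k q r t ≤ b) (hj : j ≠ S.sig i) :
    |S.resp t i j r - S.rhoHat i j r t * sqnorm (S.x i j)| ≤ S.N * S.P * (S.crossBound * b) := by
  let I : Finset (Σ _ : Fin S.N, Fin S.P) := univ.sigma S.noisePatches
  let f : (Σ _ : Fin S.N, Fin S.P) → ℝ := fun a =>
    S.y i * (S.y a.1 * S.rho a.1 a.2 r t * dot (S.x a.1 a.2) (S.x i j))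
  have hmem : ⟨i, j⟩ ∈ I := mem_sigma.2 ⟨mem_univ i, mem_noisePatches.2 hj⟩
  have hresp : S.resp t i j r = S.resp 0 i j r + ∑ a ∈ I, f a := by
    simp only [resp, dot_w_noise hdyn t hj r, mul_add, mul_sum, I, f, sum_sigma]
  have hdiag : f ⟨i, j⟩ = S.rho i j r t * sqnorm (S.x i j) := by
    simp only [f, sqnorm]
    linear_combination (S.rho i j r t * dot (S.x i j) (S.x i j)) * y_mul_self i
  have hcard : (#(I.erase ⟨i, j⟩) : ℝ) ≤ S.N * S.P := by
    have hI : #I ≤ S.N * S.P := by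
      rw [card_sigma]
      simpa using sum_le_card_nsmul univ _ _ fun k _ => card_noisePatches_le k
    exact_mod_cast (card_le_card (erase_subset _ _)).trans hI
  rw [rhoHat_mul_sqnorm hE hj, hresp, ← add_sum_erase I f hmem, hdiag, add_sub_add_left_eq_sub,
    add_sub_cancel_left]
  calc |∑ a ∈ I.erase ⟨i, j⟩, f a| ≤ ∑ a ∈ I.erase ⟨i, j⟩, |f a| := abs_sum_le_sum_abs _ _
    _ ≤ #(I.erase ⟨i, j⟩) • (S.crossBound * b) := by
        refine sum_le_card_nsmul _ _ _ fun ⟨k, q⟩ ha => ?_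
        obtain ⟨hne, ha⟩ := mem_erase.1 ha
        have hq : q ≠ S.sig k := mem_noisePatches.1 (mem_sigma.1 ha).2
        exact abs_cross_term_le hE hj hq (by simpa [Sigma.ext_iff] using hne) (hrho k q hq)
    _ ≤ S.N * S.P * (S.crossBound * b) := by
        rw [nsmul_eq_mul]
        exact mul_le_mul_of_nonneg_right hcard (mul_nonneg S.crossBound_nonneg hb)

lemma abs_resp_sub_le_of_noiseSq_mul_rho_le (hdyn : S.ATDyn) (hE : S.EventE)
    (hW : S.WellScaled ζ C) (hB : 0 ≤ B)
    (hrho : ∀ k q, q ≠ S.sig k → S.noiseSq * S.rho k q r t ≤ B) (hj : j ≠ S.sig i) :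
    |S.resp t i j r - S.rhoHat i j r t * sqnorm (S.x i j)| ≤
      ζ * B / (S.cbrtMP * S.logHorizon) := by
  have hD := S.noiseSq_pos
  have hscale : 0 < S.cbrtMP * S.logHorizon :=
    mul_pos (by linarith [S.one_le_cbrtMP]) (by linarith [hW.two_le_logHorizon])
  refine (abs_resp_sub_rhoHat_mul_sqnorm_le hdyn hE (div_nonneg hB hD.le)
    (fun k q hq => (le_div_iff₀' hD).2 (hrho k q hq)) hj).trans ?_
  rw [le_div_iff₀ hscale]
  calc S.N * S.P * (S.crossBound * (B / S.noiseSq)) * (S.cbrtMP * S.logHorizon)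
      = S.N * S.P * S.crossBound * S.cbrtMP * S.logHorizon * (B / S.noiseSq) := by ring
    _ ≤ ζ * S.noiseSq * (B / S.noiseSq) :=
        mul_le_mul_of_nonneg_right hW.cross (div_nonneg hB hD.le)
    _ = ζ * B := by rw [mul_assoc, mul_div_cancel₀ _ hD.ne']

/-! ### Margins -/

lemma noiseMargin_eq_sum_product (t : ℕ) (i : Fin S.N) :
    S.noiseMargin t i = ∑ a ∈ univ ×ˢ S.noisePatches i, S.resp t i a.2 a.1 ^ 3 := by
  rw [noiseMargin, sum_product]

lemma card_mul_div_cbrtMP_pow_three_le (hb : 0 ≤ b) (i : Fin S.N) :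
    #((univ : Finset (Fin S.m)) ×ˢ S.noisePatches i) * (b / S.cbrtMP) ^ 3 ≤ b ^ 3 := by
  have hMP := S.one_le_cbrtMP
  have hcard : (#((univ : Finset (Fin S.m)) ×ˢ S.noisePatches i) : ℝ) ≤ S.cbrtMP ^ 3 := by
    rw [card_product, card_univ, Fintype.card_fin, cbrtMP_pow_three]
    exact_mod_cast Nat.mul_le_mul_left _ (card_noisePatches_le i)
  calc _ ≤ S.cbrtMP ^ 3 * (b / S.cbrtMP) ^ 3 := by gcongr
    _ = b ^ 3 := by field_simp

lemma neg_pow_three_le_noiseMargin (hb : 0 ≤ b)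
    (hresp : ∀ p r, p ≠ S.sig i → -(b / S.cbrtMP) ≤ S.resp t i p r) :
    -b ^ 3 ≤ S.noiseMargin t i := by
  have hsum := neg_card_mul_pow_le_sum_pow (s := univ ×ˢ S.noisePatches i)
    (z := fun a => S.resp t i a.2 a.1) odd_three
    fun a ha => hresp a.2 a.1 (mem_noisePatches.1 (mem_product.1 ha).2)
  rw [noiseMargin_eq_sum_product]
  linarith [card_mul_div_cbrtMP_pow_three_le hb i]

lemma resp_pow_three_sub_le_noiseMargin (hb : 0 ≤ b)
    (hresp : ∀ p r, p ≠ S.sig i → -(b / S.cbrtMP) ≤ S.resp t i p r) (hj : j ≠ S.sig i)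
    (r : Fin S.m) :
    S.resp t i j r ^ 3 - b ^ 3 ≤ S.noiseMargin t i := by
  have hMP := S.one_le_cbrtMP
  have hsum := pow_sub_card_mul_pow_le_sum_pow (s := univ ×ˢ S.noisePatches i)
    (z := fun a => S.resp t i a.2 a.1) (i₀ := (r, j)) odd_three (by positivity)
    (fun a ha => hresp a.2 a.1 (mem_noisePatches.1 (mem_product.1 ha).2))
    (mem_product.2 ⟨mem_univ r, mem_noisePatches.2 hj⟩)
  rw [noiseMargin_eq_sum_product]
  linarith [card_mul_div_cbrtMP_pow_three_le hb i]

lemma noiseMargin_le_pow_three (hb : 0 ≤ b)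
    (hresp : ∀ p r, p ≠ S.sig i → S.resp t i p r ≤ b / S.cbrtMP) : S.noiseMargin t i ≤ b ^ 3 := by
  rw [noiseMargin_eq_sum_product]
  exact (sum_pow_le_card_mul_pow odd_three fun a ha =>
    hresp a.2 a.1 (mem_noisePatches.1 (mem_product.1 ha).2)).trans
      (card_mul_div_cbrtMP_pow_three_le hb i)

lemma m_mul_advSignal_mul_initSignal_pow_three_le (hW : S.WellScaled ζ C) (t : ℕ)
    (hi : i ∈ S.SL) : S.m * (S.advSignal t i * S.initSignal) ^ 3 ≤ 1 / 8 := by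
  have hB := S.initSignal_nonneg
  have hM := S.one_le_cbrtM
  have ha := (advSignal_pos t hi).le
  have hsmall : S.cbrtM * (S.alpha * S.initSignal) ≤ 1 / 2 := by
    have h0 : 0 ≤ S.cbrtM * (S.alpha * S.initSignal) := by
      have := S.halpha
      positivity
    nlinarith [hW.initSignal_small, hW.le_const]
  rw [← cbrtM_pow_three, ← mul_pow]
  calc (S.cbrtM * (S.advSignal t i * S.initSignal)) ^ 3
      ≤ (S.cbrtM * (S.alpha * S.initSignal)) ^ 3 := by
        gcongr
        exact advSignal_le_alpha t hi
    _ ≤ (1 / 2) ^ 3 := odd_three.pow_le_pow.2 hsmall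
    _ = 1 / 8 := by norm_num

lemma neg_advSignal_mul_initSignal_le (hdyn : S.ATDyn) (hE : S.EventE) (t : ℕ) (hi : i ∈ S.SL)
    (r : Fin S.m) : -(S.advSignal t i * S.initSignal) ≤ S.advSignal t i * S.wsig t r := by
  rw [← mul_neg]
  exact mul_le_mul_of_nonneg_left (neg_initSignal_le_wsig hdyn hE t r) (advSignal_pos t hi).le

lemma neg_le_advSignal_pow_three_mul_sum (hdyn : S.ATDyn) (hE : S.EventE)
    (hW : S.WellScaled ζ C) (t : ℕ) (hi : i ∈ S.SL) :
    -(1 / 8) ≤ S.advSignal t i ^ 3 * ∑ r, S.wsig t r ^ 3 := by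
  have hsum := neg_card_mul_pow_le_sum_pow (s := univ) odd_three
    fun r _ => neg_advSignal_mul_initSignal_le hdyn hE t hi r
  rw [card_univ, Fintype.card_fin] at hsum
  simp only [mul_sum, ← mul_pow]
  linarith [m_mul_advSignal_mul_initSignal_pow_three_le hW t hi]

lemma pow_three_sub_le_advSignal_pow_three_mul_sum (hdyn : S.ATDyn) (hE : S.EventE)
    (hW : S.WellScaled ζ C) (t : ℕ) (hi : i ∈ S.SL) (r : Fin S.m) :
    (S.advSignal t i * S.wsig t r) ^ 3 - 1 / 8 ≤ S.advSignal t i ^ 3 * ∑ r, S.wsig t r ^ 3 := by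
  have hsum := pow_sub_card_mul_pow_le_sum_pow (s := univ) odd_three
    (mul_nonneg (advSignal_pos t hi).le S.initSignal_nonneg)
    (fun r _ => neg_advSignal_mul_initSignal_le hdyn hE t hi r) (mem_univ r)
  rw [card_univ, Fintype.card_fin] at hsum
  simp only [mul_sum, ← mul_pow]
  linarith [m_mul_advSignal_mul_initSignal_pow_three_le hW t hi]

lemma noiseMargin_sub_le_marg (hdyn : S.ATDyn) (hE : S.EventE) (hW : S.WellScaled ζ C) (t : ℕ)
    (i : Fin S.N) : S.noiseMargin t i - 1 / 8 ≤ S.marg t i := by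
  rcases mem_SL_or_mem_SU i with hi | hi
  · rw [marg_of_mem_SL t hi]
    linarith [neg_le_advSignal_pow_three_mul_sum hdyn hE hW t hi]
  · rw [marg_of_mem_SU t hi]
    linarith

/-! ### The coarse bound up to the horizon -/

variable (S) in
/-- The bound `ρ ≤ 10 log(TNmP/δ)^{1/3} / (σ_n² d)` on all noise coefficients at iteration `t`. -/
def CoarseBound (t : ℕ) : Prop :=
  ∀ r i j, j ≠ S.sig i → S.noiseSq * S.rho i j r t ≤ 10 * S.cbrtLog

lemma CoarseBound.abs_resp_sub_le (hdyn : S.ATDyn) (hE : S.EventE) (hW : S.WellScaled ζ C)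
    (ht : S.CoarseBound t) (hj : j ≠ S.sig i) (r : Fin S.m) :
    |S.resp t i j r - S.rhoHat i j r t * sqnorm (S.x i j)| ≤ 10 * ζ / S.cbrtMP := by
  have hMP := S.one_le_cbrtMP
  have hlam := hW.one_le_cbrtLog
  have hL := hW.two_le_logHorizon
  have hζ := hW.zeta_pos
  refine (abs_resp_sub_le_of_noiseSq_mul_rho_le hdyn hE hW (by positivity) (ht r) hj).trans ?_
  rw [← div_div]
  calc ζ * (10 * S.cbrtLog) / S.cbrtMP / S.logHorizon
      = 10 * ζ / S.cbrtMP * (S.cbrtLog / S.logHorizon) := by ring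
    _ ≤ 10 * ζ / S.cbrtMP :=
        mul_le_of_le_one_right (by positivity) (div_le_one_of_le₀ hW.cbrtLog_le (by linarith))

lemma CoarseBound.abs_resp_sub_rho_mul_sqnorm_le (hdyn : S.ATDyn) (hE : S.EventE)
    (hW : S.WellScaled ζ C) (ht : S.CoarseBound t) (hj : j ≠ S.sig i) (r : Fin S.m) :
    |S.resp t i j r - S.rho i j r t * sqnorm (S.x i j)| ≤ 11 * ζ / S.cbrtMP := by
  have hsplit : S.resp t i j r - S.rho i j r t * sqnorm (S.x i j) =
      (S.resp t i j r - S.rhoHat i j r t * sqnorm (S.x i j)) + S.resp 0 i j r := by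
    rw [rhoHat_mul_sqnorm hE hj]
    ring
  calc |S.resp t i j r - S.rho i j r t * sqnorm (S.x i j)|
      ≤ |S.resp t i j r - S.rhoHat i j r t * sqnorm (S.x i j)| + |S.resp 0 i j r| :=
        hsplit ▸ abs_add_le _ _
    _ ≤ 10 * ζ / S.cbrtMP + ζ / S.cbrtMP :=
        add_le_add (ht.abs_resp_sub_le hdyn hE hW hj r)
          ((abs_resp_zero_le hE hj r).trans hW.initNoise_le)
    _ = 11 * ζ / S.cbrtMP := by ring

lemma WellScaled.eleven_mul_div_cbrtMP_le (hW : S.WellScaled ζ C) :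
    11 * ζ / S.cbrtMP ≤ 1 / 200 / S.cbrtMP :=
  div_le_div_of_nonneg_right (by linarith [hW.zeta_le]) (by linarith [S.one_le_cbrtMP])

lemma WellScaled.eleven_mul_div_cbrtMP_le_const (hW : S.WellScaled ζ C) :
    11 * ζ / S.cbrtMP ≤ 1 / 200 :=
  hW.eleven_mul_div_cbrtMP_le.trans (div_le_self (by norm_num) S.one_le_cbrtMP)

lemma CoarseBound.neg_le_resp (hdyn : S.ATDyn) (hE : S.EventE) (hW : S.WellScaled ζ C)
    (ht : S.CoarseBound t) (hj : j ≠ S.sig i) (r : Fin S.m) :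
    -(1 / 2 / S.cbrtMP) ≤ S.resp t i j r := by
  have hMP := S.one_le_cbrtMP
  have happrox := abs_le.1 (ht.abs_resp_sub_rho_mul_sqnorm_le hdyn hE hW hj r)
  have hρ : 0 ≤ S.rho i j r t * sqnorm (S.x i j) :=
    mul_nonneg (rho_nonneg i j r t) (sqnorm_pos hE hj).le
  have : (1 : ℝ) / 200 / S.cbrtMP ≤ 1 / 2 / S.cbrtMP := by gcongr; norm_num
  linarith [hW.eleven_mul_div_cbrtMP_le]

lemma CoarseBound.resp_sq_le (hdyn : S.ATDyn) (hE : S.EventE) (hW : S.WellScaled ζ C)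
    (ht : S.CoarseBound t) (hj : j ≠ S.sig i) (r : Fin S.m) :
    S.resp t i j r ^ 2 ≤ 400 * S.logHorizon := by
  have hlam := hW.one_le_cbrtLog
  have hsmall := hW.eleven_mul_div_cbrtMP_le_const
  have happrox := abs_le.1 (ht.abs_resp_sub_rho_mul_sqnorm_le hdyn hE hW hj r)
  have hρ0 := rho_nonneg i j r t
  have hlow := mul_nonneg hρ0 (sqnorm_pos hE hj).le
  have hup := mul_le_mul_of_nonneg_left (sqnorm_le_noiseSq hE hj) hρ0
  have hcoarse := ht r i j hj
  calc S.resp t i j r ^ 2 ≤ (20 * S.cbrtLog) ^ 2 := sq_le_sq' (by linarith) (by linarith)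
    _ = 400 * S.cbrtLog ^ 2 := by ring
    _ ≤ 400 * S.logHorizon := by linarith [hW.cbrtLog_sq_le]

lemma WellScaled.mul_eta_noiseSq_logHorizon_le (hW : S.WellScaled ζ C) :
    1200 * (S.eta * S.noiseSq * S.logHorizon) ≤ 1 := by
  have hpos : 0 ≤ S.eta * S.noiseSq * S.logHorizon :=
    mul_nonneg (mul_nonneg S.heta.le S.noiseSq_pos.le) (by linarith [hW.two_le_logHorizon])
  nlinarith [hW.eta_noise, hW.le_const]

lemma CoarseBound.noiseSq_mul_rho_succ_le (hdyn : S.ATDyn) (hE : S.EventE)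
    (hW : S.WellScaled ζ C) (ht : S.CoarseBound t) (hj : j ≠ S.sig i) (r : Fin S.m) :
    S.noiseSq * S.rho i j r (t + 1) ≤ S.noiseSq * S.rho i j r t + psi (S.marg t i) := by
  have hη := S.heta
  have hD := S.noiseSq_pos
  have hψ := psi_pos (S.marg t i)
  rw [rho_succ, mul_add]
  gcongr
  calc S.noiseSq * (3 * S.eta / S.N * psi (S.marg t i) * S.resp t i j r ^ 2)
      ≤ S.noiseSq * (3 * S.eta * psi (S.marg t i) * (400 * S.logHorizon)) := by
        gcongr
        · exact div_le_self (by positivity) S.one_le_N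
        · exact ht.resp_sq_le hdyn hE hW hj r
    _ = 1200 * (S.eta * S.noiseSq * S.logHorizon) * psi (S.marg t i) := by ring
    _ ≤ psi (S.marg t i) := mul_le_of_le_one_left hψ.le hW.mul_eta_noiseSq_logHorizon_le

lemma CoarseBound.psi_marg_le (hdyn : S.ATDyn) (hE : S.EventE) (hW : S.WellScaled ζ C)
    (ht : S.CoarseBound t) (hj : j ≠ S.sig i)
    (hlarge : 5 * S.cbrtLog ≤ S.noiseSq * S.rho i j r t) : psi (S.marg t i) ≤ 1 / S.T := by
  have hlam := hW.one_le_cbrtLog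
  have happrox := abs_le.1 (ht.abs_resp_sub_rho_mul_sqnorm_le hdyn hE hW hj r)
  have hρ := mul_le_mul_of_nonneg_left (half_noiseSq_le_sqnorm hE hj) (rho_nonneg i j r t)
  have hresp : 2 * S.cbrtLog ≤ S.resp t i j r := by
    linarith [hW.eleven_mul_div_cbrtMP_le_const]
  have hcube : (2 * S.cbrtLog) ^ 3 ≤ S.resp t i j r ^ 3 := odd_three.pow_le_pow.2 hresp
  rw [mul_pow, hW.cbrtLog_pow_three] at hcube
  have hnoise := resp_pow_three_sub_le_noiseMargin (by norm_num)
    (fun p r hp => ht.neg_le_resp hdyn hE hW hp r) hj r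
  have hmarg : S.logHorizon ≤ S.marg t i := by
    linarith [noiseMargin_sub_le_marg hdyn hE hW t i, hW.two_le_logHorizon]
  exact (psi_antitone hmarg).trans ((psi_le_exp_neg _).trans hW.exp_neg_le)

lemma noiseSq_mul_rho_le (hdyn : S.ATDyn) (hE : S.EventE) (hW : S.WellScaled ζ C)
    (ht : t ≤ S.T) (r : Fin S.m) (i : Fin S.N) (j : Fin S.P) (hj : j ≠ S.sig i) :
    S.noiseSq * S.rho i j r t ≤ 5 * S.cbrtLog + 1 + t / S.T := by
  have hlam := hW.one_le_cbrtLog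
  induction t generalizing r i j with
  | zero => simp only [rho, mul_zero, CharP.cast_eq_zero, zero_div]; linarith
  | succ t ih =>
    have hcoarse : S.CoarseBound t := fun r i j hj => by
      have := ih (by lia) r i j hj
      have : (t : ℝ) / S.T ≤ 1 := div_le_one_of_le₀ (by exact_mod_cast by lia) (by positivity)
      linarith
    have hstep := hcoarse.noiseSq_mul_rho_succ_le hdyn hE hW hj r
    rcases le_total (S.noiseSq * S.rho i j r t) (5 * S.cbrtLog) with hsmall | hlarge
    · have : 0 ≤ ((t + 1 : ℕ) : ℝ) / S.T := by positivity
      linarith [psi_le_one (S.marg t i)]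
    · have hψ := hcoarse.psi_marg_le hdyn hE hW hj hlarge
      push_cast
      rw [add_div]
      linarith [ih (by lia) r i j hj]

lemma coarseBound_of_le (hdyn : S.ATDyn) (hE : S.EventE) (hW : S.WellScaled ζ C) (ht : t ≤ S.T) :
    S.CoarseBound t := fun r i j hj => by
  have : (t : ℝ) / S.T ≤ 1 := div_le_one_of_le₀ (by exact_mod_cast ht) (by positivity)
  linarith [noiseSq_mul_rho_le hdyn hE hW ht r i j hj, hW.one_le_cbrtLog]

lemma neg_le_noiseMargin (hdyn : S.ATDyn) (hE : S.EventE) (hW : S.WellScaled ζ C) (ht : t ≤ S.T)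
    (i : Fin S.N) : -(1 / 8) ≤ S.noiseMargin t i := by
  have h := neg_pow_three_le_noiseMargin (by norm_num)
    fun p r (hp : p ≠ S.sig i) => (coarseBound_of_le hdyn hE hW ht).neg_le_resp hdyn hE hW hp r
  linarith

/-! ### The early phase -/

variable (S) in
/-- The number of iterations of the early phase: the lower bound for `T₁`, rounded up. -/
def earlySteps : ℕ := ⌈S.timeScale / (76800 * (S.logConf * √S.logConf))⌉₊

lemma WellScaled.logConf_pos (hW : S.WellScaled ζ C) : 0 < S.logConf :=
  one_pos.trans_le hW.one_le_logConf

lemma WellScaled.logConf_mul_sqrt_pos (hW : S.WellScaled ζ C) :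
    0 < S.logConf * √S.logConf :=
  mul_pos hW.logConf_pos (Real.sqrt_pos.2 hW.logConf_pos)

lemma timeScale_le_earlySteps_mul (hW : S.WellScaled ζ C) :
    S.timeScale ≤ S.earlySteps * (76800 * (S.logConf * √S.logConf)) := by
  have := hW.logConf_mul_sqrt_pos
  exact (div_le_iff₀ (by positivity)).1 (Nat.le_ceil _)

lemma earlySteps_mul_le (hW : S.WellScaled ζ C) :
    S.earlySteps * (76800 * (S.logConf * √S.logConf)) ≤ 2 * S.timeScale := by
  have hpos := hW.logConf_mul_sqrt_pos
  have hceil : (S.earlySteps : ℝ) < S.timeScale / (76800 * (S.logConf * √S.logConf)) + 1 :=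
    Nat.ceil_lt_add_one (div_nonneg S.timeScale_pos.le (by positivity))
  rw [← le_div_iff₀ (by positivity), two_mul, add_div]
  have : 1 ≤ S.timeScale / (76800 * (S.logConf * √S.logConf)) :=
    (one_le_div (by positivity)).2 hW.timeScale_large
  linarith

lemma earlySteps_le_T (hW : S.WellScaled ζ C) : S.earlySteps ≤ S.T := by
  have hlog : 1 ≤ S.logConf * √S.logConf :=
    one_le_mul_of_one_le_of_one_le hW.one_le_logConf hW.one_le_sqrt_logConf
  have hT : (S.earlySteps : ℝ) ≤ S.T := by
    calc (S.earlySteps : ℝ) ≤ S.earlySteps * (76800 * (S.logConf * √S.logConf)) :=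
          le_mul_of_one_le_right (by positivity) (by linarith)
      _ ≤ 2 * S.timeScale := earlySteps_mul_le hW
      _ ≤ C * S.timeScale := by
          gcongr
          · exact S.timeScale_pos.le
          · linarith [hW.le_const]
      _ ≤ S.T := hW.timeScale_le
  exact_mod_cast hT

variable (S) in
lemma eta_mul_timeScale :
    S.eta * S.sigma0 * S.sigman ^ 3 * (S.d * √S.d) * S.timeScale = S.N := by
  have := S.heta
  have := S.hsigma0
  have := S.hsigman
  have := S.d_pos
  rw [timeScale, mul_div_cancel₀]
  positivity

lemma eta_mul_initNoise_mul_timeScale :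
    S.eta * S.initNoise * S.noiseSq * S.timeScale = 2 * S.N * √S.logConf := by
  rw [initNoise, noiseSq, Real.sqrt_mul S.d_pos.le]
  linear_combination 2 * √S.logConf * S.eta_mul_timeScale

lemma earlySteps_mul_increment_le (hW : S.WellScaled ζ C) :
    S.earlySteps * (12 * S.eta / S.N * S.initNoise ^ 2 * S.noiseSq) ≤ S.initNoise / 1600 := by
  have hN := S.one_le_N
  have hL := hW.one_le_logConf
  have hη := S.heta
  have hD := S.noiseSq_pos
  have hA := S.initNoise_nonneg
  have hlog := hW.logConf_mul_sqrt_pos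
  refine le_of_mul_le_mul_right ?_ (mul_pos (show (0 : ℝ) < 76800 by norm_num) hlog)
  calc S.earlySteps * (12 * S.eta / S.N * S.initNoise ^ 2 * S.noiseSq) *
        (76800 * (S.logConf * √S.logConf))
      = S.earlySteps * (76800 * (S.logConf * √S.logConf)) *
          (12 * S.eta / S.N * S.initNoise ^ 2 * S.noiseSq) := by ring
    _ ≤ 2 * S.timeScale * (12 * S.eta / S.N * S.initNoise ^ 2 * S.noiseSq) :=
        mul_le_mul_of_nonneg_right (earlySteps_mul_le hW) (by positivity)
    _ = 24 / S.N * S.initNoise * (S.eta * S.initNoise * S.noiseSq * S.timeScale) := by ring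
    _ = 48 * S.initNoise * √S.logConf := by
        rw [eta_mul_initNoise_mul_timeScale]
        field_simp
        ring
    _ ≤ 48 * S.initNoise * (S.logConf * √S.logConf) := by
        gcongr
        exact le_mul_of_one_le_left (Real.sqrt_nonneg _) hL
    _ = S.initNoise / 1600 * (76800 * (S.logConf * √S.logConf)) := by ring

lemma abs_resp_le_of_noiseSq_mul_rho_le (hdyn : S.ATDyn) (hE : S.EventE) (hW : S.WellScaled ζ C)
    (hrho : ∀ k q, q ≠ S.sig k → S.noiseSq * S.rho k q r t ≤ S.initNoise / 1600)
    (hj : j ≠ S.sig i) : |S.resp t i j r| ≤ 2 * S.initNoise := by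
  have hA := S.initNoise_nonneg
  have hscale : 1 ≤ S.cbrtMP * S.logHorizon :=
    one_le_mul_of_one_le_of_one_le S.one_le_cbrtMP (by linarith [hW.two_le_logHorizon])
  have hcross : ζ * (S.initNoise / 1600) / (S.cbrtMP * S.logHorizon) ≤ S.initNoise / 4 :=
    (div_le_self (mul_nonneg hW.zeta_pos.le (by positivity)) hscale).trans
      (by nlinarith [hW.zeta_le])
  have happrox := abs_le.1 ((abs_resp_sub_le_of_noiseSq_mul_rho_le hdyn hE hW (by positivity)
    hrho hj).trans hcross)
  rw [rhoHat_mul_sqnorm hE hj] at happrox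
  have hinit := abs_le.1 (abs_resp_zero_le hE hj r)
  have hρ0 := rho_nonneg i j r t
  have hlow := mul_nonneg hρ0 (sqnorm_pos hE hj).le
  have hup := mul_le_mul_of_nonneg_left (sqnorm_le_noiseSq hE hj) hρ0
  have := hrho i j hj
  exact abs_le.2 ⟨by linarith, by linarith⟩

lemma noiseSq_mul_rho_le_mul_increment (hdyn : S.ATDyn) (hE : S.EventE) (hW : S.WellScaled ζ C)
    (ht : t ≤ S.earlySteps) (r : Fin S.m) (i : Fin S.N) (j : Fin S.P) (hj : j ≠ S.sig i) :
    S.noiseSq * S.rho i j r t ≤ t * (12 * S.eta / S.N * S.initNoise ^ 2 * S.noiseSq) := by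
  have hη := S.heta
  have hD := S.noiseSq_pos
  induction t generalizing r i j with
  | zero => simp [rho]
  | succ t ih =>
    have hsmall : ∀ k q, q ≠ S.sig k → S.noiseSq * S.rho k q r t ≤ S.initNoise / 1600 :=
      fun k q hq => (ih (by lia) r k q hq).trans <| le_trans
        (by gcongr; lia) (earlySteps_mul_increment_le hW)
    have hsq : S.resp t i j r ^ 2 ≤ (2 * S.initNoise) ^ 2 := by
      rw [← sq_abs]
      gcongr
      exact abs_resp_le_of_noiseSq_mul_rho_le hdyn hE hW hsmall hj
    have hstep : S.noiseSq * (3 * S.eta / S.N * psi (S.marg t i) * S.resp t i j r ^ 2) ≤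
        S.noiseSq * (3 * S.eta / S.N * 1 * (2 * S.initNoise) ^ 2) := by
      have := (psi_pos (S.marg t i)).le
      gcongr
      exact psi_le_one _
    rw [rho_succ]
    push_cast
    linear_combination hstep + ih (by lia) r i j hj

lemma noiseSq_mul_rho_early_le (hdyn : S.ATDyn) (hE : S.EventE) (hW : S.WellScaled ζ C)
    (ht : t ≤ S.earlySteps) (hj : j ≠ S.sig i) (r : Fin S.m) :
    S.noiseSq * S.rho i j r t ≤ S.initNoise / 1600 := by
  have hη := S.heta
  have hD := S.noiseSq_pos
  refine (noiseSq_mul_rho_le_mul_increment hdyn hE hW ht r i j hj).trans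
    (le_trans ?_ (earlySteps_mul_increment_le hW))
  gcongr

lemma abs_resp_early_le (hdyn : S.ATDyn) (hE : S.EventE) (hW : S.WellScaled ζ C)
    (ht : t ≤ S.earlySteps) (hj : j ≠ S.sig i) (r : Fin S.m) :
    |S.resp t i j r| ≤ 2 * S.initNoise :=
  abs_resp_le_of_noiseSq_mul_rho_le hdyn hE hW
    (fun _ _ hq => noiseSq_mul_rho_early_le hdyn hE hW ht hq r) hj

lemma noiseMargin_early_le_one (hdyn : S.ATDyn) (hE : S.EventE) (hW : S.WellScaled ζ C)
    (ht : t ≤ S.earlySteps) (i : Fin S.N) : S.noiseMargin t i ≤ 1 := by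
  have hMP := S.one_le_cbrtMP
  rw [← one_pow 3]
  refine noiseMargin_le_pow_three zero_le_one fun p r hp => ?_
  calc S.resp t i p r ≤ 2 * S.initNoise :=
        (le_abs_self _).trans (abs_resp_early_le hdyn hE hW ht hp r)
    _ ≤ 2 * (ζ / S.cbrtMP) := by gcongr; exact hW.initNoise_le
    _ = 2 * ζ / S.cbrtMP := by ring
    _ ≤ 1 / S.cbrtMP := by gcongr; linarith [hW.zeta_le]

/-! ### Signal learning -/

lemma WellScaled.alpha_pow_three_le (hW : S.WellScaled ζ C) :
    S.alpha ^ 3 ≤ 2 * (S.alpha - S.eps) ^ 3 := by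
  have hε : 2000 * S.eps ≤ S.alpha := by nlinarith [hW.eps_small, hW.le_const, S.heps]
  have hcube : (9 / 10 * S.alpha) ^ 3 ≤ (S.alpha - S.eps) ^ 3 :=
    odd_three.pow_le_pow.2 (by linarith [S.halpha])
  nlinarith [pow_pos S.halpha 3]

variable (S) in
/-- A lower bound for the quadratic growth rate of the signal coordinates, valid as long as all
learnable margins are at most `V`. -/
def signalRate (V : ℝ) : ℝ := 3 * S.eta / S.N * (#S.SL * (S.alpha - S.eps) ^ 3) * psi V

variable {V K : ℝ}

lemma signalRate_le_signalGain (hV : ∀ i ∈ S.SL, S.marg t i ≤ V) :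
    S.signalRate V ≤ S.signalGain t := by
  have hae := sub_pos.2 S.hepsalpha
  rw [signalRate, signalGain, mul_assoc]
  refine mul_le_mul_of_nonneg_left ?_ S.three_mul_eta_div_N_pos.le
  calc #S.SL * (S.alpha - S.eps) ^ 3 * psi V
      = #S.SL • (psi V * (S.alpha - S.eps) ^ 3) := by rw [nsmul_eq_mul]; ring
    _ ≤ ∑ i ∈ S.SL, psi (S.marg t i) * S.advSignal t i ^ 3 := by
        refine card_nsmul_le_sum _ _ _ fun i hi => ?_
        have hcube : (S.alpha - S.eps) ^ 3 ≤ S.advSignal t i ^ 3 :=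
          odd_three.pow_le_pow.2 (alpha_sub_eps_le_advSignal t hi)
        exact mul_le_mul (psi_antitone (hV i hi)) hcube (by positivity) (psi_pos _).le

lemma alpha_sub_eps_mul_wsig_le (hdyn : S.ATDyn) (hE : S.EventE) (hW : S.WellScaled ζ C)
    (hV0 : 0 ≤ V) (ht : t ≤ S.T) (hi : i ∈ S.SL) (hV : S.marg t i ≤ V) (hr : 0 ≤ S.wsig t r) :
    (S.alpha - S.eps) * S.wsig t r ≤ V + 1 := by
  have hsignal := pow_three_sub_le_advSignal_pow_three_mul_sum hdyn hE hW t hi r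
  have hnoise := neg_le_noiseMargin hdyn hE hW ht i
  rw [marg_of_mem_SL t hi] at hV
  calc (S.alpha - S.eps) * S.wsig t r ≤ S.advSignal t i * S.wsig t r :=
        mul_le_mul_of_nonneg_right (alpha_sub_eps_le_advSignal t hi) hr
    _ ≤ V + 1 := by
        rw [← odd_three.pow_le_pow]
        have : V + 1 ≤ (V + 1) ^ 3 := le_self_pow₀ (by linarith) three_ne_zero
        linarith

lemma signalRate_nonneg (V : ℝ) : 0 ≤ S.signalRate V := by
  have := S.heta
  have := psi_pos V
  have := sub_pos.2 S.hepsalpha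
  unfold signalRate
  positivity

lemma signalRate_le (V : ℝ) : S.signalRate V ≤ 3 * S.eta * (S.alpha - S.eps) ^ 3 := by
  have hN := S.one_le_N
  have hη := S.heta
  have hae := sub_pos.2 S.hepsalpha
  have hcard : (#S.SL : ℝ) ≤ S.N := by exact_mod_cast card_finset_fin_le S.SL
  calc S.signalRate V ≤ 3 * S.eta / S.N * (S.N * (S.alpha - S.eps) ^ 3) * 1 := by
        have := (psi_pos V).le
        rw [signalRate]
        gcongr
        exact psi_le_one V
    _ = 3 * S.eta * (S.alpha - S.eps) ^ 3 := by field_simp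

lemma signalRate_mul_wsig_le_one (hdyn : S.ATDyn) (hE : S.EventE) (hW : S.WellScaled ζ C)
    (hV0 : 0 ≤ V) (hVC : 300000 * (1 + Real.exp V) ≤ C * S.logConf) (ht : t ≤ S.T)
    (hV : ∀ i ∈ S.SL, S.marg t i ≤ V) (hr : 0 ≤ S.wsig t r) : S.signalRate V * S.wsig t r ≤ 1 := by
  obtain ⟨i, hi⟩ := hW.SL_nonempty
  have hη := S.heta
  have hae := sub_pos.2 S.hepsalpha
  have hwsig := alpha_sub_eps_mul_wsig_le hdyn hE hW hV0 ht hi (hV i hi) hr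
  have hVL : 3 * (V + 1) ≤ C * S.logHorizon := by
    have : C * S.logConf ≤ C * S.logHorizon :=
      mul_le_mul_of_nonneg_left hW.logConf_le (by linarith [hW.le_const])
    linarith [Real.add_one_le_exp V]
  calc S.signalRate V * S.wsig t r ≤ 3 * S.eta * (S.alpha - S.eps) ^ 3 * S.wsig t r := by
        gcongr
        exact signalRate_le V
    _ = S.eta * (S.alpha - S.eps) ^ 2 * (3 * ((S.alpha - S.eps) * S.wsig t r)) := by ring
    _ ≤ S.eta * S.alpha ^ 2 * (C * S.logHorizon) := by
        refine mul_le_mul ?_ (by linarith) (by positivity) (by positivity)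
        gcongr
        linarith [S.heps]
    _ = C * (S.eta * S.alpha ^ 2 * S.logHorizon) := by ring
    _ ≤ 1 := hW.eta_signal

lemma le_earlySteps_mul_signalRate (hW : S.WellScaled ζ C) (V : ℝ) :
    3 / 2 * (C ^ 3 * S.logHorizon ^ 3) * psi V ≤
      S.earlySteps * S.signalRate V * S.sigma0 * (76800 * (S.logConf * √S.logConf)) := by
  have hη := S.heta
  have hσ := S.hsigma0
  have hN := S.one_le_N
  have hψ := psi_pos V
  have hsignal : C ^ 3 * S.sigman ^ 3 * (S.d * √S.d) * S.logHorizon ^ 3 ≤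
      2 * (S.alpha - S.eps) ^ 3 * #S.SL :=
    hW.signal_large.trans (mul_le_mul_of_nonneg_right hW.alpha_pow_three_le (Nat.cast_nonneg _))
  calc 3 / 2 * (C ^ 3 * S.logHorizon ^ 3) * psi V
      = 3 / 2 * (C ^ 3 * S.logHorizon ^ 3) * psi V * (1 / S.N) *
          (S.eta * S.sigma0 * S.sigman ^ 3 * (S.d * √S.d) * S.timeScale) := by
        rw [eta_mul_timeScale]
        field_simp
    _ = 3 / 2 * (S.eta / S.N) * S.sigma0 * psi V * S.timeScale *
          (C ^ 3 * S.sigman ^ 3 * (S.d * √S.d) * S.logHorizon ^ 3) := by ring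
    _ ≤ 3 / 2 * (S.eta / S.N) * S.sigma0 * psi V *
          (S.earlySteps * (76800 * (S.logConf * √S.logConf))) *
          (2 * (S.alpha - S.eps) ^ 3 * #S.SL) := by
        refine mul_le_mul ?_ hsignal ?_ (by have := hW.logConf_pos; positivity)
        · gcongr
          exact timeScale_le_earlySteps_mul hW
        · have := S.hsigman
          have := hW.two_le_logHorizon
          have := hW.le_const
          positivity
    _ = _ := by rw [signalRate]; ring

lemma four_le_earlySteps_mul_signalRate (hW : S.WellScaled ζ C)
    (hVC : 300000 * (1 + Real.exp V) ≤ C * S.logConf) :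
    4 ≤ S.earlySteps * S.signalRate V * S.sigma0 := by
  have hC := hW.le_const
  have hL := hW.one_le_logConf
  have hlog : S.logConf * √S.logConf * S.logConf ≤ S.logHorizon ^ 3 := by
    have hsqrt : √S.logConf ≤ S.logHorizon :=
      (Real.sqrt_le_left (by linarith [hW.logConf_le])).2 (by nlinarith [hW.logConf_le])
    have hLL := hW.logConf_le
    have hLT : 0 ≤ S.logHorizon := by linarith
    calc S.logConf * √S.logConf * S.logConf
        ≤ S.logHorizon * S.logHorizon * S.logHorizon := by gcongr
      _ = S.logHorizon ^ 3 := by ring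
  refine le_of_mul_le_mul_right (le_trans ?_ (le_earlySteps_mul_signalRate hW V))
    (mul_pos (show (0 : ℝ) < 76800 by norm_num) hW.logConf_mul_sqrt_pos)
  rw [psi, mul_one_div, le_div_iff₀ (by positivity)]
  calc 4 * (76800 * (S.logConf * √S.logConf)) * (1 + Real.exp V)
      = 307200 / 300000 * (S.logConf * √S.logConf) * (300000 * (1 + Real.exp V)) := by ring
    _ ≤ 307200 / 300000 * (S.logConf * √S.logConf) * (C * S.logConf) := by gcongr
    _ = 307200 / 300000 * C * (S.logConf * √S.logConf * S.logConf) := by ring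
    _ ≤ 3 / 2 * C ^ 3 * S.logHorizon ^ 3 := by
        have : C ≤ C ^ 3 := le_self_pow₀ (by linarith) three_ne_zero
        exact mul_le_mul (by linarith) hlog (by positivity) (by positivity)
    _ = 3 / 2 * (C ^ 3 * S.logHorizon ^ 3) := by ring

lemma exists_lt_marg_early (hdyn : S.ATDyn) (hE : S.EventE) (hW : S.WellScaled ζ C)
    (hV0 : 0 ≤ V) (hVC : 300000 * (1 + Real.exp V) ≤ C * S.logConf) :
    ∃ τ < S.earlySteps, ∃ i ∈ S.SL, V < S.marg τ i := by
  by_contra! hcon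
  obtain ⟨r, hr⟩ := hE.2.2.2.2.2.2.1
  rw [dot_e1 S.hd] at hr
  have hσ := S.hsigma0
  have hr : S.sigma0 / 2 ≤ S.wsig 0 r := hr
  have hlarge := four_le_earlySteps_mul_signalRate hW hVC
  have hrate : 0 < S.signalRate V := (signalRate_nonneg V).lt_of_ne fun h => by
    rw [← h] at hlarge
    norm_num at hlarge
  have hpos : 0 < S.wsig 0 r := by linarith
  have hgrow := mul_mul_lt_two_of_quadratic_growth (a := fun t => S.wsig t r)
    (n := S.earlySteps) hrate hpos
    (fun t ht => by
      rw [wsig_succ hdyn]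
      gcongr
      exact signalRate_le_signalGain (hcon t ht))
    (fun t ht => signalRate_mul_wsig_le_one hdyn hE hW hV0 hVC (ht.le.trans (earlySteps_le_T hW))
      (hcon t ht) (hpos.le.trans (wsig_mono hdyn r (Nat.zero_le t))))
  have : S.earlySteps * S.signalRate V * (S.sigma0 / 2) ≤
      S.earlySteps * S.signalRate V * S.wsig 0 r := by gcongr
  linarith

lemma marg_le_of_wsig_le (hdyn : S.ATDyn) (hE : S.EventE) (hW : S.WellScaled ζ C)
    (ht : t ≤ S.earlySteps) (hi : i ∈ S.SL) (hb : 0 ≤ b)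
    (hw : ∀ r, S.wsig t r ≤ b / (S.alpha * S.cbrtM)) : S.marg t i ≤ b ^ 3 + 1 := by
  have hα := S.halpha
  have hM := S.one_le_cbrtM
  have ha := advSignal_pos t hi
  have hsum : ∑ r, S.wsig t r ^ 3 ≤ (b / S.alpha) ^ 3 := by
    refine (sum_pow_le_card_mul_pow odd_three fun r _ => hw r).trans_eq ?_
    rw [card_univ, Fintype.card_fin, ← cbrtM_pow_three]
    field_simp
  have hsignal : S.advSignal t i ^ 3 * ∑ r, S.wsig t r ^ 3 ≤ b ^ 3 := by
    calc S.advSignal t i ^ 3 * ∑ r, S.wsig t r ^ 3 ≤ S.alpha ^ 3 * (b / S.alpha) ^ 3 :=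
          (mul_le_mul_of_nonneg_left hsum (by positivity)).trans <| by
            gcongr
            exact advSignal_le_alpha t hi
      _ = b ^ 3 := by field_simp
  rw [marg_of_mem_SL t hi]
  linarith [noiseMargin_early_le_one hdyn hE hW ht i]

lemma T0_lt_earlySteps {C0 : ℝ} (hdyn : S.ATDyn) (hE : S.EventE) (hW : S.WellScaled ζ C)
    (hC0 : 0 ≤ C0) (hC : 300000 * (1 + Real.exp (C0 ^ 3 + 1)) ≤ C) :
    S.T0 C0 < S.earlySteps := by
  obtain ⟨τ, hτ, i, hi, hmarg⟩ := exists_lt_marg_early hdyn hE hW (V := C0 ^ 3 + 1)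
    (by positivity) (hC.trans (le_mul_of_one_le_right (by linarith [hW.le_const])
      hW.one_le_logConf))
  contrapose! hmarg
  refine marg_le_of_wsig_le hdyn hE hW hτ.le hi hC0 fun r => ?_
  by_contra! hlt
  exact Nat.notMem_of_lt_sInf (hτ.trans_le hmarg) ⟨r, hlt⟩

lemma advSignal_pow_three_mul_sum_le (hdyn : S.ATDyn) (hW : S.WellScaled ζ C) (hB : 0 ≤ B)
    {τ : ℕ} (hτ : τ ≤ t) {k : Fin S.N} (hk : k ∈ S.SL) (hi : i ∈ S.SL)
    (hle : S.advSignal t k ^ 3 * ∑ r, S.wsig t r ^ 3 ≤ B) :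
    S.advSignal τ i ^ 3 * ∑ r, S.wsig τ r ^ 3 ≤ 2 * B := by
  have ha := advSignal_pos τ hi
  have hα : S.advSignal τ i ^ 3 ≤ 2 * S.advSignal t k ^ 3 := by
    calc S.advSignal τ i ^ 3 ≤ S.alpha ^ 3 := odd_three.pow_le_pow.2 (advSignal_le_alpha τ hi)
      _ ≤ 2 * (S.alpha - S.eps) ^ 3 := hW.alpha_pow_three_le
      _ ≤ 2 * S.advSignal t k ^ 3 := mul_le_mul_of_nonneg_left
          (odd_three.pow_le_pow.2 (alpha_sub_eps_le_advSignal t hk)) zero_le_two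
  have hmono : ∑ r, S.wsig τ r ^ 3 ≤ ∑ r, S.wsig t r ^ 3 :=
    sum_le_sum fun r _ => odd_three.pow_le_pow.2 (wsig_mono hdyn r hτ)
  refine (mul_le_mul_of_nonneg_left hmono (by positivity)).trans ?_
  rcases le_total (∑ r, S.wsig t r ^ 3) 0 with hneg | hpos
  · exact (mul_nonpos_of_nonneg_of_nonpos (by positivity) hneg).trans (by linarith)
  · linarith [mul_le_mul_of_nonneg_right hα hpos]

lemma psi_marg_le_of_earlySteps_le (hdyn : S.ATDyn) (hE : S.EventE) (hW : S.WellScaled ζ C)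
    (hK : 1 ≤ K) (hKC : 300000 * (22 * K ^ 2) ≤ C) (ht : S.earlySteps ≤ t) (htT : t ≤ S.T)
    {k : Fin S.N} (hk : k ∈ S.SL) : psi (S.marg t k) ≤ 1 / (K * √S.logConf) := by
  by_contra! hcon
  have hL := hW.logConf_pos
  have hKL : 1 ≤ K * √S.logConf := one_le_mul_of_one_le_of_one_le hK hW.one_le_sqrt_logConf
  have hlog : 0 ≤ Real.log (K * √S.logConf) := Real.log_nonneg hKL
  have hmarg := lt_log_of_one_div_lt_psi (by linarith) hcon
  have hV : 300000 * (1 + Real.exp (2 * Real.log (K * √S.logConf) + 3)) ≤ C * S.logConf := by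
    have := one_add_exp_two_mul_log_add_three_le hKL
    rw [mul_pow, Real.sq_sqrt hL.le] at this
    linarith [mul_le_mul_of_nonneg_right hKC hL.le]
  obtain ⟨τ, hτ, i, hi, hlt⟩ := exists_lt_marg_early hdyn hE hW (by positivity) hV
  rw [marg_of_mem_SL τ hi] at hlt
  rw [marg_of_mem_SL t hk] at hmarg
  have hsignal := advSignal_pow_three_mul_sum_le hdyn hW (B := Real.log (K * √S.logConf) + 1)
    (by positivity) (hτ.le.trans ht) hk hi
    (by linarith [neg_le_noiseMargin hdyn hE hW htT k])
  linarith [noiseMargin_early_le_one hdyn hE hW hτ.le i]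

/-! ### Noise memorization -/

variable {C1 : ℝ} {n : ℕ}

variable (S) in
/-- Some shifted noise coefficient of an unlearnable sample exceeds the threshold of `T₁`; both
sides are multiplied by `σ_n² d`. -/
def Memorized (C1 : ℝ) (t : ℕ) : Prop :=
  ∃ r, ∃ k ∈ S.SU, ∃ q, q ≠ S.sig k ∧ C1 / S.cbrtMP < S.noiseSq * S.rhoHat k q r t

lemma WellScaled.exists_noisePatch (hW : S.WellScaled ζ C) (k : Fin S.N) : ∃ q, q ≠ S.sig k :=
  have : Nontrivial (Fin S.P) := Fin.nontrivial_iff_two_le.2 hW.two_le_P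
  exists_ne _

lemma lt_rhoHatMax_iff_memorized (hW : S.WellScaled ζ C) :
    C1 / (((S.m : ℝ) * S.P) ^ ((1 : ℝ) / 3) * S.sigman ^ 2 * S.d) < S.rhoHatMax t ↔
      S.Memorized C1 t := by
  have hD := S.noiseSq_pos
  have hbdd : BddAbove {z : ℝ | ∃ r, ∃ k ∈ S.SU, ∃ q, q ≠ S.sig k ∧ z = S.rhoHat k q r t} := by
    refine (Set.finite_range fun a : Fin S.m × Fin S.N × Fin S.P =>
      S.rhoHat a.2.1 a.2.2 a.1 t).bddAbove.mono ?_
    rintro _ ⟨r, k, -, q, -, rfl⟩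
    exact ⟨(r, k, q), rfl⟩
  obtain ⟨k, hk⟩ := hW.SU_nonempty
  obtain ⟨q, hq⟩ := hW.exists_noisePatch k
  rw [rhoHatMax, lt_csSup_iff hbdd ⟨_, ⟨0, S.hm⟩, k, hk, q, hq, rfl⟩, mul_assoc, ← cbrtMP,
    ← noiseSq, ← div_div]
  simp only [div_lt_iff₀' hD, Set.mem_ofPred_eq, Memorized]
  grind

lemma T1_eq_sInf_memorized (hW : S.WellScaled ζ C) :
    S.T1 C1 = sInf {t | S.Memorized C1 t} := by
  simp only [T1, lt_rhoHatMax_iff_memorized hW]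

lemma abs_noiseSq_mul_rhoHat_sub_rho_le (hE : S.EventE) (hj : j ≠ S.sig i) (r : Fin S.m)
    (t : ℕ) : |S.noiseSq * S.rhoHat i j r t - S.noiseSq * S.rho i j r t| ≤ 2 * S.initNoise := by
  have hD := S.noiseSq_pos
  have hx := sqnorm_pos hE hj
  have hhalf := half_noiseSq_le_sqnorm hE hj
  rw [← mul_sub, rhoHat, add_sub_cancel_left, ← resp, abs_mul, abs_div, abs_of_pos hD,
    abs_of_pos hx, mul_div_assoc', div_le_iff₀ hx]
  calc S.noiseSq * |S.resp 0 i j r| ≤ 2 * sqnorm (S.x i j) * S.initNoise := by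
        gcongr
        · linarith
        · exact abs_resp_zero_le hE hj r
    _ = 2 * S.initNoise * sqnorm (S.x i j) := by ring

lemma not_memorized_early (hdyn : S.ATDyn) (hE : S.EventE) (hW : S.WellScaled ζ C)
    (hζ : 125 * ζ ≤ C1) (ht : t ≤ S.earlySteps) : ¬ S.Memorized C1 t := by
  rintro ⟨r, k, -, q, hq, hlt⟩
  have hshift := (abs_le.1 (abs_noiseSq_mul_rhoHat_sub_rho_le hE hq r t)).2
  have hearly := noiseSq_mul_rho_early_le hdyn hE hW ht hq r
  have hinit : 3 * S.initNoise ≤ C1 / S.cbrtMP := by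
    calc 3 * S.initNoise ≤ 3 * (ζ / S.cbrtMP) := by gcongr; exact hW.initNoise_le
      _ = 3 * ζ / S.cbrtMP := by ring
      _ ≤ C1 / S.cbrtMP := div_le_div_of_nonneg_right (by linarith [hW.zeta_pos])
          (by linarith [S.one_le_cbrtMP])
  linarith [S.initNoise_nonneg]

lemma rhoHat_mul_sqnorm_le (hE : S.EventE) (hj : j ≠ S.sig i) (hb : 0 ≤ b)
    (hrho : S.noiseSq * S.rhoHat i j r t ≤ b) :
    S.rhoHat i j r t * sqnorm (S.x i j) ≤ 3 / 2 * b := by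
  have hD := S.noiseSq_pos
  calc S.rhoHat i j r t * sqnorm (S.x i j) ≤ b / S.noiseSq * sqnorm (S.x i j) :=
        mul_le_mul_of_nonneg_right ((le_div_iff₀' hD).2 hrho) (sqnorm_pos hE hj).le
    _ ≤ b / S.noiseSq * (3 * S.noiseSq / 2) := by
        gcongr
        exact sqnorm_le_noiseSq hE hj
    _ = 3 / 2 * b := by field_simp

lemma psi_le_psi_marg_of_not_memorized (hdyn : S.ATDyn) (hE : S.EventE) (hW : S.WellScaled ζ C)
    (hC1 : 0 < C1) (hζ : 125 * ζ ≤ C1) (ht : t ≤ S.T) (hnot : ¬ S.Memorized C1 t)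
    (hi : i ∈ S.SU) : psi (4 * C1 ^ 3) ≤ psi (S.marg t i) := by
  have hMP := S.one_le_cbrtMP
  refine psi_antitone ?_
  rw [marg_of_mem_SU t hi]
  calc S.noiseMargin t i ≤ (79 / 50 * C1) ^ 3 :=
        noiseMargin_le_pow_three (by positivity) fun p r hp => by
          have hrho : S.noiseSq * S.rhoHat i p r t ≤ C1 / S.cbrtMP :=
            not_lt.1 fun h => hnot ⟨r, i, hi, p, hp, h⟩
          have hmain := rhoHat_mul_sqnorm_le hE hp (by positivity) hrho
          have happrox :=
            (abs_le.1 ((coarseBound_of_le hdyn hE hW ht).abs_resp_sub_le hdyn hE hW hp r)).2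
          have hcross : 10 * ζ / S.cbrtMP ≤ 2 / 25 * C1 / S.cbrtMP :=
            div_le_div_of_nonneg_right (by linarith) (by linarith)
          calc S.resp t i p r ≤ 3 / 2 * (C1 / S.cbrtMP) + 2 / 25 * C1 / S.cbrtMP := by linarith
            _ = 79 / 50 * C1 / S.cbrtMP := by ring
    _ ≤ 4 * C1 ^ 3 := by
        rw [mul_pow]
        gcongr
        norm_num

/-! ### Growth of the leading noise coefficient -/

variable (S) in
/-- The standard deviation `σ₀ σ_n √d` of an initial noise response. -/
def initScale : ℝ := S.sigma0 * S.sigman * √S.d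

variable (S) in
/-- The largest shifted coefficient of filter `r` over the noise patches of the unlearnable
samples, multiplied by `σ_n² d`. -/
def leadingNoise (r : Fin S.m) (t : ℕ) : ℝ :=
  ⨆ a : {a : Fin S.N × Fin S.P // a.1 ∈ S.SU ∧ a.2 ≠ S.sig a.1},
    S.noiseSq * S.rhoHat a.1.1 a.1.2 r t

variable (S) in
/-- The noise coefficients of the learnable samples in filter `r` exceed the leading coefficient by
at most the factor `√log(16NmP/δ)`. -/
def LearnableNoiseBound (r : Fin S.m) (t : ℕ) : Prop :=
  ∀ k ∈ S.SL, ∀ q, q ≠ S.sig k → S.noiseSq * S.rho k q r t ≤ √S.logConf * S.leadingNoise r t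

variable (S) in
/-- The rate `c` in the recursion `a_{t+1} ≥ a_t + c a_t²` satisfied by the leading coefficient
before memorization; the factor `6/25` is just below `(1/2)²`. -/
def memRate (C1 : ℝ) : ℝ := 3 * S.eta / S.N * psi (4 * C1 ^ 3) * (6 / 25 * S.noiseSq)

lemma initScale_pos : 0 < S.initScale := by
  have := S.hsigma0
  have := S.hsigman
  have := S.d_pos
  unfold initScale
  positivity

lemma memRate_pos : 0 < S.memRate C1 := by
  have := S.heta
  have := S.one_le_N
  have := psi_pos (4 * C1 ^ 3)
  have := S.noiseSq_pos
  unfold memRate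
  positivity

lemma initNoise_eq_initScale_mul : S.initNoise = 2 * S.initScale * √S.logConf := by
  rw [initNoise, Real.sqrt_mul S.d_pos.le, initScale]
  ring

lemma eta_mul_initScale_mul_timeScale :
    S.eta * S.initScale * S.noiseSq * S.timeScale = S.N := by
  rw [initScale, noiseSq, ← S.eta_mul_timeScale]
  ring

lemma noiseSq_mul_rhoHat_le_leadingNoise {k : Fin S.N} (hk : k ∈ S.SU) {q : Fin S.P}
    (hq : q ≠ S.sig k) (r : Fin S.m) (t : ℕ) :
    S.noiseSq * S.rhoHat k q r t ≤ S.leadingNoise r t :=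
  le_ciSup (f := fun a : {a : Fin S.N × Fin S.P // a.1 ∈ S.SU ∧ a.2 ≠ S.sig a.1} =>
    S.noiseSq * S.rhoHat a.1.1 a.1.2 r t) (Set.finite_range _).bddAbove ⟨(k, q), hk, hq⟩

lemma exists_noiseSq_mul_rhoHat_eq_leadingNoise (hW : S.WellScaled ζ C) (r : Fin S.m) (t : ℕ) :
    ∃ k ∈ S.SU, ∃ q, q ≠ S.sig k ∧ S.noiseSq * S.rhoHat k q r t = S.leadingNoise r t := by
  obtain ⟨k, hk⟩ := hW.SU_nonempty
  obtain ⟨q, hq⟩ := hW.exists_noisePatch k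
  have : Nonempty {a : Fin S.N × Fin S.P // a.1 ∈ S.SU ∧ a.2 ≠ S.sig a.1} := ⟨(k, q), hk, hq⟩
  obtain ⟨⟨a, ha⟩, hmax⟩ := exists_eq_ciSup_of_finite
    (f := fun a : {a : Fin S.N × Fin S.P // a.1 ∈ S.SU ∧ a.2 ≠ S.sig a.1} =>
      S.noiseSq * S.rhoHat a.1.1 a.1.2 r t)
  exact ⟨a.1, ha.1, a.2, ha.2, hmax⟩

lemma leadingNoise_mono (r : Fin S.m) : Monotone (S.leadingNoise r) := fun _ _ hst =>
  ciSup_mono (Set.finite_range _).bddAbove fun a =>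
    mul_le_mul_of_nonneg_left (rhoHat_mono a.1.1 a.1.2 r hst) S.noiseSq_pos.le

lemma exists_initScale_le_leadingNoise_zero (hE : S.EventE) (hW : S.WellScaled ζ C) :
    ∃ r, S.initScale / 6 ≤ S.leadingNoise r 0 := by
  obtain ⟨k, hk⟩ := hW.SU_nonempty
  obtain ⟨q, hq⟩ := hW.exists_noisePatch k
  obtain ⟨r, hr⟩ := hE.2.2.2.2.2.2.2 k q hq
  have hD := S.noiseSq_pos
  have hω := S.initScale_pos
  have hx := sqnorm_pos hE hq
  refine ⟨r, le_trans ?_ (noiseSq_mul_rhoHat_le_leadingNoise hk hq r 0)⟩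
  rw [rhoHat, rho, zero_add, mul_div_assoc', le_div_iff₀ hx]
  calc S.initScale / 6 * sqnorm (S.x k q) ≤ S.initScale / 6 * (3 * S.noiseSq / 2) := by
        gcongr
        exact sqnorm_le_noiseSq hE hq
    _ = S.noiseSq * (S.initScale / 4) := by ring
    _ ≤ _ := by gcongr; exact hr

section Leading

variable (hdyn : S.ATDyn) (hE : S.EventE) (hW : S.WellScaled ζ C)
  (hlead : S.initScale / 6 ≤ S.leadingNoise r t)

include hlead in
lemma leadingNoise_pos : 0 < S.leadingNoise r t :=
  (div_pos S.initScale_pos (by norm_num)).trans_le hlead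

include hlead in
lemma initNoise_le_leadingNoise : S.initNoise ≤ 12 * (√S.logConf * S.leadingNoise r t) := by
  have := mul_le_mul_of_nonneg_left hlead (Real.sqrt_nonneg S.logConf)
  rw [initNoise_eq_initScale_mul]
  linarith

include hE hW hlead in
lemma noiseSq_mul_rho_le_leadingNoise (hSL : S.LearnableNoiseBound r t) (k : Fin S.N)
    (q : Fin S.P) (hq : q ≠ S.sig k) :
    S.noiseSq * S.rho k q r t ≤ 25 * (√S.logConf * S.leadingNoise r t) := by
  have hpos := leadingNoise_pos hlead
  have hle : S.leadingNoise r t ≤ √S.logConf * S.leadingNoise r t :=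
    le_mul_of_one_le_left hpos.le hW.one_le_sqrt_logConf
  rcases mem_SL_or_mem_SU k with hk | hk
  · linarith [hSL k hk q hq]
  · linarith [(abs_le.1 (abs_noiseSq_mul_rhoHat_sub_rho_le hE hq r t)).1,
      noiseSq_mul_rhoHat_le_leadingNoise hk hq r t, initNoise_le_leadingNoise hlead]

include hdyn hE hW hlead in
lemma abs_resp_sub_le_leadingNoise (hSL : S.LearnableNoiseBound r t) (hj : j ≠ S.sig i) :
    |S.resp t i j r - S.rhoHat i j r t * sqnorm (S.x i j)| ≤ S.leadingNoise r t / 100 := by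
  have hpos := leadingNoise_pos hlead
  have hLT := hW.two_le_logHorizon
  have hMP := S.one_le_cbrtMP
  have hsqrt : √S.logConf ≤ S.cbrtMP * S.logHorizon :=
    calc √S.logConf ≤ S.logHorizon :=
          (Real.sqrt_le_self_iff.2 (.inr hW.one_le_logConf)).trans hW.logConf_le
      _ ≤ S.cbrtMP * S.logHorizon := le_mul_of_one_le_left (by linarith) hMP
  refine (abs_resp_sub_le_of_noiseSq_mul_rho_le hdyn hE hW (by positivity)
    (noiseSq_mul_rho_le_leadingNoise hE hW hlead hSL) hj).trans ?_
  rw [div_le_iff₀ (by positivity)]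
  calc ζ * (25 * (√S.logConf * S.leadingNoise r t))
      ≤ 1 / 2500 * (25 * (S.cbrtMP * S.logHorizon * S.leadingNoise r t)) := by
        gcongr
        exact hW.zeta_le
    _ = S.leadingNoise r t / 100 * (S.cbrtMP * S.logHorizon) := by ring

include hdyn hE hW hlead in
lemma leadingNoise_add_le_succ (hC1 : 0 < C1) (hζ : 125 * ζ ≤ C1) (ht : t ≤ S.T)
    (hnot : ¬ S.Memorized C1 t) (hSL : S.LearnableNoiseBound r t) :
    S.leadingNoise r t + S.memRate C1 * S.leadingNoise r t ^ 2 ≤ S.leadingNoise r (t + 1) := by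
  obtain ⟨k, hk, q, hq, hmax⟩ := exists_noiseSq_mul_rhoHat_eq_leadingNoise hW r t
  have hη := S.heta
  have hN := S.one_le_N
  have hD := S.noiseSq_pos
  have hpos := leadingNoise_pos hlead
  have hρ : 0 < S.rhoHat k q r t := pos_of_mul_pos_right (hmax ▸ hpos) hD.le
  have hresp : 49 / 100 * S.leadingNoise r t ≤ S.resp t k q r := by
    have happrox := (abs_le.1 (abs_resp_sub_le_leadingNoise hdyn hE hW hlead hSL hq)).1
    have hmain := mul_le_mul_of_nonneg_left (half_noiseSq_le_sqnorm hE hq) hρ.le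
    linarith
  have hsq : 6 / 25 * S.leadingNoise r t ^ 2 ≤ S.resp t k q r ^ 2 := by
    calc 6 / 25 * S.leadingNoise r t ^ 2 ≤ (49 / 100 * S.leadingNoise r t) ^ 2 := by
          rw [mul_pow]; gcongr; norm_num
      _ ≤ S.resp t k q r ^ 2 := by gcongr
  have hψ := psi_le_psi_marg_of_not_memorized hdyn hE hW hC1 hζ ht hnot hk
  have hψ0 := (psi_pos (S.marg t k)).le
  calc S.leadingNoise r t + S.memRate C1 * S.leadingNoise r t ^ 2
      = S.noiseSq * (S.rhoHat k q r t +
          3 * S.eta / S.N * psi (4 * C1 ^ 3) * (6 / 25 * S.leadingNoise r t ^ 2)) := by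
        rw [mul_add, hmax, memRate]
        ring
    _ ≤ S.noiseSq * (S.rhoHat k q r t +
          3 * S.eta / S.N * psi (S.marg t k) * S.resp t k q r ^ 2) := by gcongr
    _ = S.noiseSq * S.rhoHat k q r (t + 1) := by rw [rhoHat, rhoHat, rho_succ]; ring
    _ ≤ S.leadingNoise r (t + 1) := noiseSq_mul_rhoHat_le_leadingNoise hk hq r (t + 1)

include hdyn hE hW hlead in
lemma abs_resp_le_leadingNoise {k : Fin S.N} (hk : k ∈ S.SL) (hSL : S.LearnableNoiseBound r t)
    {q : Fin S.P} (hq : q ≠ S.sig k) :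
    |S.resp t k q r| ≤ 14 * (√S.logConf * S.leadingNoise r t) := by
  have happrox := abs_le.1 (abs_resp_sub_le_leadingNoise hdyn hE hW hlead hSL hq)
  rw [rhoHat_mul_sqnorm hE hq] at happrox
  have hρ0 := rho_nonneg k q r t
  have hlow := mul_nonneg hρ0 (sqnorm_pos hE hq).le
  have hup := mul_le_mul_of_nonneg_left (sqnorm_le_noiseSq hE hq) hρ0
  have hinit := abs_le.1 ((abs_resp_zero_le hE hq r).trans (initNoise_le_leadingNoise hlead))
  have hle : S.leadingNoise r t ≤ √S.logConf * S.leadingNoise r t :=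
    le_mul_of_one_le_left (leadingNoise_pos hlead).le hW.one_le_sqrt_logConf
  have := hSL k hk q hq
  exact abs_le.2 ⟨by linarith, by linarith⟩

include hdyn hE hW hlead in
/-- After the early phase the learnable samples are fitted, so their weights `ψ` are too small for
their noise coefficients to gain on the leading one. -/
lemma noiseSq_mul_rho_succ_sub_le
    (hC : 300000 * (22 * (1700 * (1 + Real.exp (4 * C1 ^ 3))) ^ 2) ≤ C)
    (hearly : S.earlySteps ≤ t) (ht : t ≤ S.T) (hSL : S.LearnableNoiseBound r t) {k : Fin S.N}
    (hk : k ∈ S.SL) {q : Fin S.P} (hq : q ≠ S.sig k) :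
    S.noiseSq * S.rho k q r (t + 1) - S.noiseSq * S.rho k q r t ≤
      √S.logConf * (S.memRate C1 * S.leadingNoise r t ^ 2) := by
  have hη := S.heta
  have hN := S.one_le_N
  have hD := S.noiseSq_pos
  have hs := hW.one_le_sqrt_logConf
  have hexp := Real.exp_pos (4 * C1 ^ 3)
  have hψ0 := (psi_pos (S.marg t k)).le
  have hψ : psi (S.marg t k) * (196 * √S.logConf ^ 2) ≤
      √S.logConf * (psi (4 * C1 ^ 3) * (6 / 25)) := by
    calc psi (S.marg t k) * (196 * √S.logConf ^ 2)
        ≤ 1 / (1700 * (1 + Real.exp (4 * C1 ^ 3)) * √S.logConf) * (196 * √S.logConf ^ 2) := by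
          gcongr
          exact psi_marg_le_of_earlySteps_le hdyn hE hW (by linarith) hC hearly ht hk
      _ = √S.logConf * (psi (4 * C1 ^ 3) * (196 / 1700)) := by rw [psi]; field_simp
      _ ≤ √S.logConf * (psi (4 * C1 ^ 3) * (6 / 25)) := by
          have := psi_pos (4 * C1 ^ 3)
          gcongr ?_ * (?_ * ?_)
          norm_num
  have hresp : S.resp t k q r ^ 2 ≤ (14 * (√S.logConf * S.leadingNoise r t)) ^ 2 := by
    rw [← sq_abs]
    gcongr
    exact abs_resp_le_leadingNoise hdyn hE hW hlead hk hSL hq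
  calc S.noiseSq * S.rho k q r (t + 1) - S.noiseSq * S.rho k q r t
      = S.noiseSq * (3 * S.eta / S.N * psi (S.marg t k) * S.resp t k q r ^ 2) := by
        rw [rho_succ]
        ring
    _ ≤ S.noiseSq * (3 * S.eta / S.N * psi (S.marg t k) *
          (14 * (√S.logConf * S.leadingNoise r t)) ^ 2) := by gcongr
    _ = S.noiseSq * (3 * S.eta / S.N) * S.leadingNoise r t ^ 2 *
          (psi (S.marg t k) * (196 * √S.logConf ^ 2)) := by ring
    _ ≤ S.noiseSq * (3 * S.eta / S.N) * S.leadingNoise r t ^ 2 *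
          (√S.logConf * (psi (4 * C1 ^ 3) * (6 / 25))) := by gcongr
    _ = √S.logConf * (S.memRate C1 * S.leadingNoise r t ^ 2) := by
        rw [memRate]
        ring

include hdyn hE hW hlead in
lemma learnableNoiseBound_early (ht : t ≤ S.earlySteps) : S.LearnableNoiseBound r t := by
  intro k _ q hq
  have hpos := leadingNoise_pos hlead
  have : 0 ≤ √S.logConf * S.leadingNoise r t := by positivity
  linarith [noiseSq_mul_rho_early_le hdyn hE hW ht hq r, initNoise_le_leadingNoise hlead]

end Leading

lemma learnableNoiseBound_of_forall_not_memorized (hdyn : S.ATDyn) (hE : S.EventE)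
    (hW : S.WellScaled ζ C) (hC1 : 0 < C1) (hζ : 125 * ζ ≤ C1)
    (hC : 300000 * (22 * (1700 * (1 + Real.exp (4 * C1 ^ 3))) ^ 2) ≤ C)
    (hlead : S.initScale / 6 ≤ S.leadingNoise r 0) (ht : t ≤ S.T)
    (hnot : ∀ s < t, ¬ S.Memorized C1 s) : S.LearnableNoiseBound r t := by
  have hlead' : ∀ s, S.initScale / 6 ≤ S.leadingNoise r s := fun s =>
    hlead.trans (leadingNoise_mono r (Nat.zero_le s))
  induction t with
  | zero => exact learnableNoiseBound_early hdyn hE hW hlead (Nat.zero_le _)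
  | succ t ih =>
    have hSL := ih (by lia) fun s hs => hnot s (by lia)
    rcases le_or_gt S.earlySteps t with hlate | hearly
    · intro k hk q hq
      have hgain := leadingNoise_add_le_succ hdyn hE hW (hlead' t) hC1 hζ (by lia)
        (hnot t (by lia)) hSL
      have hloss := noiseSq_mul_rho_succ_sub_le hdyn hE hW (hlead' t) hC hlate (by lia) hSL hk hq
      linarith [hSL k hk q hq, mul_le_mul_of_nonneg_left hgain (Real.sqrt_nonneg S.logConf)]
    · exact learnableNoiseBound_early hdyn hE hW (hlead' _) hearly

lemma memRate_mul_leadingNoise_le_one (hW : S.WellScaled ζ C) (hC1C : C1 ≤ C)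
    (hnot : ¬ S.Memorized C1 t) (r : Fin S.m) : S.memRate C1 * S.leadingNoise r t ≤ 1 := by
  obtain ⟨k, hk, q, hq, hmax⟩ := exists_noiseSq_mul_rhoHat_eq_leadingNoise hW r t
  have hη := S.heta
  have hD := S.noiseSq_pos
  have hC : 0 < C := by linarith [hW.le_const]
  have hψ0 := (psi_pos (4 * C1 ^ 3)).le
  have hψ1 := psi_le_one (4 * C1 ^ 3)
  have hlead : S.leadingNoise r t ≤ C := by
    calc S.leadingNoise r t ≤ C1 / S.cbrtMP :=
          hmax ▸ not_lt.1 fun h => hnot ⟨r, k, hk, q, hq, h⟩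
      _ ≤ C / S.cbrtMP := by
          have := S.one_le_cbrtMP
          gcongr
      _ ≤ C := div_le_self hC.le S.one_le_cbrtMP
  have hrate : S.memRate C1 ≤ S.eta * S.noiseSq := by
    calc S.memRate C1 ≤ 3 * S.eta * 1 * (6 / 25 * S.noiseSq) := by
          unfold memRate
          gcongr
          exact div_le_self (by positivity) S.one_le_N
      _ ≤ S.eta * S.noiseSq := by linarith [mul_pos hη hD]
  calc S.memRate C1 * S.leadingNoise r t ≤ S.eta * S.noiseSq * C :=
        (mul_le_mul_of_nonneg_left hlead memRate_pos.le).trans (by gcongr)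
    _ = C * (S.eta * S.noiseSq * 1) := by ring
    _ ≤ C * (S.eta * S.noiseSq * S.logHorizon) := by
        gcongr
        linarith [hW.two_le_logHorizon]
    _ ≤ 1 := hW.eta_noise

lemma two_lt_mul_memRate_mul_initScale (hn : 20 * (1 + Real.exp (4 * C1 ^ 3)) * S.timeScale ≤ n) :
    2 < n * S.memRate C1 * (S.initScale / 6) := by
  have hN := S.one_le_N
  have hrate := S.memRate_pos (C1 := C1)
  have hω := S.initScale_pos
  calc (2 : ℝ) < 12 / 5 := by norm_num
    _ = 12 / 5 * (S.eta * S.initScale * S.noiseSq * S.timeScale) / S.N := by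
        rw [eta_mul_initScale_mul_timeScale]
        field_simp
    _ = 20 * (1 + Real.exp (4 * C1 ^ 3)) * S.timeScale * S.memRate C1 * (S.initScale / 6) := by
        rw [memRate, psi]
        field_simp
        ring
    _ ≤ n * S.memRate C1 * (S.initScale / 6) := by gcongr

lemma exists_memorized (hdyn : S.ATDyn) (hE : S.EventE) (hW : S.WellScaled ζ C) (hC1 : 0 < C1)
    (hζ : 125 * ζ ≤ C1) (hC1C : C1 ≤ C)
    (hC : 300000 * (22 * (1700 * (1 + Real.exp (4 * C1 ^ 3))) ^ 2) ≤ C) :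
    ∃ t : ℕ, (t : ℝ) ≤ 60 * (1 + Real.exp (4 * C1 ^ 3)) * S.timeScale ∧ S.Memorized C1 t := by
  set E : ℝ := 1 + Real.exp (4 * C1 ^ 3)
  have hE1 : 1 ≤ E := by linarith [Real.exp_pos (4 * C1 ^ 3)]
  have hts : 1 ≤ S.timeScale := by
    have := one_le_mul_of_one_le_of_one_le hW.one_le_logConf hW.one_le_sqrt_logConf
    linarith [hW.timeScale_large]
  set n : ℕ := ⌊60 * E * S.timeScale⌋₊
  have hn : (n : ℝ) ≤ 60 * E * S.timeScale := Nat.floor_le (by positivity)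
  have hnT : n ≤ S.T := by
    have hCE : 60 * E ≤ C := by nlinarith
    have : (n : ℝ) ≤ S.T := hn.trans <|
      (mul_le_mul_of_nonneg_right hCE (by linarith)).trans hW.timeScale_le
    exact_mod_cast this
  by_contra! hnever
  have hnot : ∀ t < n, ¬ S.Memorized C1 t := fun t ht =>
    hnever t (le_trans (by exact_mod_cast ht.le) hn)
  obtain ⟨r, hlead⟩ := exists_initScale_le_leadingNoise_zero hE hW
  have hupper := mul_mul_lt_two_of_quadratic_growth memRate_pos (leadingNoise_pos hlead)
    (fun t ht => leadingNoise_add_le_succ hdyn hE hW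
      (hlead.trans (leadingNoise_mono r (Nat.zero_le t))) hC1 hζ (by lia) (hnot t ht)
      (learnableNoiseBound_of_forall_not_memorized hdyn hE hW hC1 hζ hC hlead (by lia)
        fun s hs => hnot s (by lia)))
    (fun t ht => memRate_mul_leadingNoise_le_one hW hC1C (hnot t ht) r)
  have hlarge : 20 * E * S.timeScale ≤ n := by
    have := one_le_mul_of_one_le_of_one_le hE1 hts
    linarith [Nat.lt_floor_add_one (60 * E * S.timeScale)]
  have hlower := two_lt_mul_memRate_mul_initScale hlarge
  have hn0 : 0 ≤ n * S.memRate C1 := mul_nonneg n.cast_nonneg memRate_pos.le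
  linarith [mul_le_mul_of_nonneg_left hlead hn0]

/-! ### The memorization time -/

lemma earlySteps_lt_T1 (hdyn : S.ATDyn) (hE : S.EventE) (hW : S.WellScaled ζ C)
    (hζ : 125 * ζ ≤ C1) (hmem : S.Memorized C1 (S.T1 C1)) : S.earlySteps < S.T1 C1 :=
  not_le.1 fun h => not_memorized_early hdyn hE hW hζ h hmem

lemma exists_resp_ge_of_memorized (hdyn : S.ATDyn) (hE : S.EventE) (hW : S.WellScaled ζ C)
    (hζ : 125 * ζ ≤ C1) (hmem : S.Memorized C1 t) :
    ∃ i ∈ S.SU, ∃ j, j ≠ S.sig i ∧ ∃ r : Fin S.m,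
      ∀ t', t ≤ t' → t' ≤ S.T → C1 / (3 * S.cbrtMP) ≤ S.resp t' i j r := by
  obtain ⟨r, k, hk, q, hq, hlt⟩ := hmem
  refine ⟨k, hk, q, hq, r, fun t' htt' ht'T => ?_⟩
  have hMP := S.one_le_cbrtMP
  have hζ0 := hW.zeta_pos
  have hρ : C1 / S.cbrtMP ≤ S.noiseSq * S.rhoHat k q r t' :=
    hlt.le.trans (mul_le_mul_of_nonneg_left (rhoHat_mono k q r htt') S.noiseSq_pos.le)
  have hρ0 : 0 ≤ S.rhoHat k q r t' :=
    nonneg_of_mul_nonneg_right (hρ.trans' (div_nonneg (by linarith) (by linarith))) S.noiseSq_pos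
  have hmain := mul_le_mul_of_nonneg_left (half_noiseSq_le_sqnorm hE hq) hρ0
  have happrox :=
    (abs_le.1 ((coarseBound_of_le hdyn hE hW ht'T).abs_resp_sub_le hdyn hE hW hq r)).1
  have hcross : 10 * ζ / S.cbrtMP ≤ C1 / S.cbrtMP / 6 := by
    rw [div_right_comm]
    exact div_le_div_of_nonneg_right (by linarith) (by linarith)
  have hsplit : C1 / (3 * S.cbrtMP) = C1 / S.cbrtMP / 2 - C1 / S.cbrtMP / 6 := by
    field_simp
    ring
  linarith

theorem WellScaled.memorization_time (hdyn : S.ATDyn) (hE : S.EventE) (hW : S.WellScaled ζ C)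
    {C0 : ℝ} (hC0 : 0 ≤ C0) (hC1 : 0 < C1) (hζ : 125 * ζ ≤ C1) (hC1C : C1 ≤ C)
    (hCC0 : 300000 * (1 + Real.exp (C0 ^ 3 + 1)) ≤ C)
    (hCC1 : 300000 * (22 * (1700 * (1 + Real.exp (4 * C1 ^ 3))) ^ 2) ≤ C) :
    (S.timeScale / (76800 * (S.logConf * √S.logConf)) ≤ S.T1 C1 ∧
      S.T1 C1 ≤ 60 * (1 + Real.exp (4 * C1 ^ 3)) * S.timeScale) ∧
    S.T0 C0 < S.T1 C1 ∧
    ∃ i ∈ S.SU, ∃ j, j ≠ S.sig i ∧ ∃ r : Fin S.m,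
      ∀ t, S.T1 C1 ≤ t → t ≤ S.T → C1 / (3 * S.cbrtMP) ≤ S.resp t i j r := by
  obtain ⟨t, ht, hmemt⟩ := exists_memorized hdyn hE hW hC1 hζ hC1C hCC1
  have hmem : S.Memorized C1 (S.T1 C1) :=
    T1_eq_sInf_memorized hW ▸ Nat.sInf_mem (s := {t | S.Memorized C1 t}) ⟨t, hmemt⟩
  have hT1t : S.T1 C1 ≤ t := T1_eq_sInf_memorized hW ▸ Nat.sInf_le hmemt
  have hearly := earlySteps_lt_T1 hdyn hE hW hζ hmem
  exact ⟨⟨(Nat.le_ceil _).trans (by exact_mod_cast hearly.le),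
      le_trans (by exact_mod_cast hT1t) ht⟩,
    (T0_lt_earlySteps hdyn hE hW hC0 hCC0).trans hearly,
    exists_resp_ge_of_memorized hdyn hE hW hζ hmem⟩

/-! ### Scales under Condition (H) -/

variable (S) in
/-- The logarithm `log(TdNmP/δ)` of Condition (H), which also involves the dimension. -/
def logFull : ℝ := Real.log ((S.T : ℝ) * S.d * S.N * S.m * S.P / S.delta)

lemma CondH.pos (H : S.CondH C) : 0 < C := one_pos.trans_le H.1

lemma CondH.logHorizon_pos (H : S.CondH C) : 0 < S.logHorizon := by
  have hC := H.pos
  have hα := S.halpha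
  have hσ := S.hsigman
  have hσ0 := S.hsigma0
  have hd := S.d_pos
  exact pos_of_pos_of_le_div S.heta (by positivity) H.2.2.2.2.2.1

lemma CondH.logFull_pos (H : S.CondH C) : 0 < S.logFull := by
  have hC := H.pos
  have hα := S.halpha
  have hσ := S.hsigman
  have hd := S.d_pos
  have hm := one_pos.trans_le S.one_le_m
  have hP := one_pos.trans_le S.one_le_P
  exact pos_of_pos_of_le_div S.hsigma0 (by positivity) H.2.2.2.2.1

lemma CondH.mul_eta_mul_logHorizon_le (H : S.CondH C) :
    C * (S.eta * S.logHorizon) ≤ min (1 / S.noiseSq) (1 / S.alpha ^ 2) :=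
  (mul_mul_le_of_le_inv_mul_div H.pos H.logHorizon_pos H.2.2.2.2.2.1).trans
    (min_le_min_right _ (min_le_right _ _))

lemma CondH.mul_eta_mul_noiseSq_le (H : S.CondH C) :
    C * (S.eta * S.noiseSq * S.logHorizon) ≤ 1 := by
  rw [mul_right_comm, ← mul_assoc, ← le_div_iff₀ S.noiseSq_pos]
  exact H.mul_eta_mul_logHorizon_le.trans (min_le_left _ _)

lemma CondH.mul_eta_mul_alpha_sq_le (H : S.CondH C) :
    C * (S.eta * S.alpha ^ 2 * S.logHorizon) ≤ 1 := by
  rw [mul_right_comm, ← mul_assoc, ← le_div_iff₀ (pow_pos S.halpha 2)]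
  exact H.mul_eta_mul_logHorizon_le.trans (min_le_right _ _)

lemma CondH.mul_sigma0_mul_logFull_le (H : S.CondH C) :
    C * (S.sigma0 * S.logFull) ≤
      min (min (1 / (S.cbrtMP ^ 2 * S.sigman * √S.d)) (1 / (S.alpha * S.cbrtM ^ 2)))
        (1 / (S.sigman * S.m ^ 2 * √S.P * S.d)) := by
  have hMP : S.cbrtMP ^ 2 = (S.m : ℝ) ^ ((2 : ℝ) / 3) * (S.P : ℝ) ^ ((2 : ℝ) / 3) := by
    rw [cbrtMP, rpow_one_third_sq (by positivity), Real.mul_rpow (by positivity) (by positivity)]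
  have hM : S.cbrtM ^ 2 = (S.m : ℝ) ^ ((2 : ℝ) / 3) := rpow_one_third_sq (by positivity)
  rw [hMP, hM]
  exact mul_mul_le_of_le_inv_mul_div H.pos H.logFull_pos H.2.2.2.2.1

lemma CondH.mul_initScale_mul_logFull_le (H : S.CondH C) :
    C * (S.initScale * S.logFull) * S.cbrtMP ≤ 1 := by
  have hσ := S.hsigman
  have hd := S.d_pos
  have hMP := S.one_le_cbrtMP
  calc C * (S.initScale * S.logFull) * S.cbrtMP
      = C * (S.sigma0 * S.logFull) * (S.sigman * √S.d * S.cbrtMP) := by rw [initScale]; ring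
    _ ≤ 1 / (S.cbrtMP ^ 2 * S.sigman * √S.d) * (S.sigman * √S.d * S.cbrtMP) := by
        gcongr
        exact H.mul_sigma0_mul_logFull_le.trans ((min_le_left _ _).trans (min_le_left _ _))
    _ = 1 / S.cbrtMP := by field_simp
    _ ≤ 1 := div_le_self zero_le_one hMP

lemma CondH.mul_alpha_mul_sigma0_mul_logFull_le (H : S.CondH C) :
    C * (S.alpha * S.sigma0 * S.logFull) * S.cbrtM ≤ 1 := by
  have hα := S.halpha
  have hM := S.one_le_cbrtM
  calc C * (S.alpha * S.sigma0 * S.logFull) * S.cbrtM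
      = C * (S.sigma0 * S.logFull) * (S.alpha * S.cbrtM) := by ring
    _ ≤ 1 / (S.alpha * S.cbrtM ^ 2) * (S.alpha * S.cbrtM) := by
        gcongr
        exact H.mul_sigma0_mul_logFull_le.trans ((min_le_left _ _).trans (min_le_right _ _))
    _ = 1 / S.cbrtM := by field_simp
    _ ≤ 1 := div_le_self zero_le_one hM

lemma CondH.mul_sigma0_mul_sigman_mul_d_mul_logFull_le (H : S.CondH C) :
    C * (S.sigma0 * S.sigman * S.d * S.logFull) ≤ 1 := by
  have hσ := S.hsigman
  have hd := S.d_pos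
  have hm := S.one_le_m
  have hP := S.one_le_P
  calc C * (S.sigma0 * S.sigman * S.d * S.logFull)
      = C * (S.sigma0 * S.logFull) * (S.sigman * S.d) := by ring
    _ ≤ 1 / (S.sigman * S.m ^ 2 * √S.P * S.d) * (S.sigman * S.d) := by
        gcongr
        exact H.mul_sigma0_mul_logFull_le.trans (min_le_right _ _)
    _ = 1 / (S.m ^ 2 * √S.P) := by field_simp
    _ ≤ 1 := div_le_self zero_le_one
        (one_le_mul_of_one_le_of_one_le (one_le_pow₀ hm) (Real.one_le_sqrt.2 hP))

lemma CondH.one_le_T (H : S.CondH C) : (1 : ℝ) ≤ S.T := by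
  rcases Nat.eq_zero_or_pos S.T with hT | hT
  · simpa [logHorizon, hT] using H.logHorizon_pos
  · exact_mod_cast hT

lemma CondH.logHorizon_le_logFull (H : S.CondH C) : S.logHorizon ≤ S.logFull := by
  have hδ := S.hdelta0
  have hN := S.one_le_N
  have hm := S.one_le_m
  have hP := S.one_le_P
  have hT := H.one_le_T
  refine Real.log_le_log (by positivity) ?_
  gcongr
  exact le_mul_of_one_le_right (by linarith) S.one_le_d

lemma CondH.half_le_logHorizon (H : S.CondH C) : 1 / 2 ≤ S.logHorizon := by
  have hP : (2 : ℝ) ≤ S.P := by exact_mod_cast H.2.2.2.2.2.2.2.2.2.2.1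
  have hT := H.one_le_T
  have harg : (2 : ℝ) ≤ S.T * S.N * S.m * S.P / S.delta := by
    rw [le_div_iff₀ S.hdelta0]
    calc (2 : ℝ) * S.delta ≤ 1 * 1 * 1 * 2 := by linarith [S.hdelta1]
      _ ≤ S.T * S.N * S.m * S.P := by
          gcongr
          exacts [S.one_le_N, S.one_le_m]
  have hlog : Real.log 2 ≤ S.logHorizon := Real.log_le_log two_pos harg
  linarith [Real.log_two_gt_d9]

lemma CondH.mul_timeScale_le (H : S.CondH C) : C * S.timeScale ≤ S.T := by
  rw [timeScale, mul_div_assoc']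
  exact H.2.1

lemma CondH.sq_mul_logHorizon_mul_logFull_le (H : S.CondH C) :
    C ^ 2 * (S.logHorizon * S.logFull) ≤ S.timeScale := by
  have hη := S.heta
  have hσ := S.hsigman
  have hσ0 := S.hsigma0
  have hd := S.d_pos
  have hC := H.pos
  have hL := H.logHorizon_pos
  have hLF := H.logFull_pos
  rw [timeScale, le_div_iff₀ (by positivity)]
  calc C ^ 2 * (S.logHorizon * S.logFull) * (S.eta * S.sigma0 * S.sigman ^ 3 * (S.d * √S.d))
      ≤ C ^ 2 * (S.logHorizon * S.logFull) * (S.eta * S.sigma0 * S.sigman ^ 3 * (S.d * S.d)) := by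
        gcongr
        exact Real.sqrt_le_self_iff.2 (.inr S.one_le_d)
    _ = C * (S.eta * S.noiseSq * S.logHorizon) * (C * (S.sigma0 * S.sigman * S.d * S.logFull)) := by
        rw [noiseSq]
        ring
    _ ≤ 1 * 1 := by
        gcongr
        · exact H.mul_eta_mul_noiseSq_le
        · exact H.mul_sigma0_mul_sigman_mul_d_mul_logFull_le
    _ ≤ S.N := by linarith [S.one_le_N]

lemma CondH.sixteen_le_T (hC : 2000 ≤ C) (H : S.CondH C) : (16 : ℝ) ≤ S.T := by
  have hhalf := H.half_le_logHorizon
  have hfull := H.logHorizon_le_logFull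
  calc (16 : ℝ) ≤ 2000 * (2000 ^ 2 * (1 / 2 * (1 / 2))) := by norm_num
    _ ≤ C * (C ^ 2 * (S.logHorizon * S.logFull)) := by
        have := H.pos
        gcongr
        linarith
    _ ≤ C * S.timeScale := mul_le_mul_of_nonneg_left H.sq_mul_logHorizon_mul_logFull_le H.pos.le
    _ ≤ S.T := H.mul_timeScale_le

variable (S) in
lemma two_le_logConf : 2 ≤ S.logConf := by
  have hδ0 := S.hdelta0
  have hN := S.one_le_N
  have hm := S.one_le_m
  have hP := S.one_le_P
  have harg : (2 : ℝ) ^ 4 ≤ 16 * S.N * S.m * S.P / S.delta := by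
    rw [le_div_iff₀ hδ0]
    calc (2 : ℝ) ^ 4 * S.delta ≤ 16 * 1 * 1 * 1 := by linarith [S.hdelta1]
      _ ≤ 16 * S.N * S.m * S.P := by gcongr
  have hlog := Real.log_le_log (by norm_num) harg
  rw [Real.log_pow, Nat.cast_ofNat] at hlog
  rw [logConf]
  linarith [Real.log_two_gt_d9]

lemma logConf_le_logHorizon (hT : (16 : ℝ) ≤ S.T) : S.logConf ≤ S.logHorizon := by
  have hδ := S.hdelta0
  have hN := S.one_le_N
  have hm := S.one_le_m
  have hP := S.one_le_P
  exact Real.log_le_log (by positivity) (by gcongr)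

variable (S) in
lemma log_sixteen_mul_m_div_le_logConf : Real.log (16 * S.m / S.delta) ≤ S.logConf := by
  have hδ := S.hdelta0
  have hN := S.one_le_N
  have hm := S.one_le_m
  have hP := S.one_le_P
  refine Real.log_le_log (by positivity) (div_le_div_of_nonneg_right ?_ hδ.le)
  calc (16 : ℝ) * S.m = 16 * 1 * S.m * 1 := by ring
    _ ≤ 16 * S.N * S.m * S.P := by gcongr

lemma exp_neg_logHorizon_le (hT : (1 : ℝ) ≤ S.T) : Real.exp (-S.logHorizon) ≤ 1 / S.T := by
  have hδ0 := S.hdelta0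
  have hδ1 := S.hdelta1
  have hN := S.one_le_N
  have hm := S.one_le_m
  have hP := S.one_le_P
  rw [logHorizon, Real.exp_neg, Real.exp_log (by positivity), ← one_div]
  refine one_div_le_one_div_of_le (by linarith) ((le_div_iff₀ hδ0).2 ?_)
  calc (S.T : ℝ) * S.delta ≤ S.T * 1 * 1 * 1 := by nlinarith
    _ ≤ S.T * S.N * S.m * S.P := by gcongr

/-! ### Cross terms under Condition (H) -/

lemma log_crossBound_le (hT : (16 : ℝ) ≤ S.T) :
    Real.log (16 * S.N ^ 2 * S.P ^ 2 / S.delta) ≤ 2 * S.logHorizon := by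
  have hδ0 := S.hdelta0
  have hδ1 := S.hdelta1
  have hN := S.one_le_N
  have hm := S.one_le_m
  have hP := S.one_le_P
  rw [logHorizon, ← Nat.cast_ofNat (R := ℝ) (n := 2), ← Real.log_pow]
  refine Real.log_le_log (by positivity) ?_
  calc 16 * (S.N : ℝ) ^ 2 * S.P ^ 2 / S.delta = 16 * S.N ^ 2 * 1 ^ 2 * S.P ^ 2 / S.delta := by ring
    _ ≤ S.T ^ 2 * S.N ^ 2 * S.m ^ 2 * S.P ^ 2 / S.delta ^ 2 := by
        gcongr
        · nlinarith
        · exact pow_le_of_le_one hδ0.le hδ1.le two_ne_zero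
    _ = (S.T * S.N * S.m * S.P / S.delta) ^ 2 := by ring

lemma crossBound_le (hT : (16 : ℝ) ≤ S.T) :
    S.crossBound ≤ 3 * S.sigman ^ 2 * (√S.d * S.logHorizon) := by
  have hL : 2 ≤ S.logHorizon := S.two_le_logConf.trans (logConf_le_logHorizon hT)
  have hsqrt : √(Real.log (16 * S.N ^ 2 * S.P ^ 2 / S.delta)) ≤ 3 / 2 * S.logHorizon :=
    Real.sqrt_le_iff.2 ⟨by linarith, by nlinarith [log_crossBound_le hT]⟩
  calc S.crossBound
      = 2 * S.sigman ^ 2 * (√S.d * √(Real.log (16 * S.N ^ 2 * S.P ^ 2 / S.delta))) := by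
        rw [crossBound, Real.sqrt_mul (Nat.cast_nonneg _)]
    _ ≤ 2 * S.sigman ^ 2 * (√S.d * (3 / 2 * S.logHorizon)) := by gcongr
    _ = 3 * S.sigman ^ 2 * (√S.d * S.logHorizon) := by ring

lemma CondH.pow_three_mul_le_sqrt_d {c : ℝ} (H : S.CondH (c ^ 6)) :
    c ^ 3 * (S.m * S.P * S.N * S.logHorizon ^ 2) ≤ √S.d := by
  refine Real.le_sqrt_of_sq_le (le_trans (le_of_eq ?_) H.2.2.1)
  rw [logHorizon]
  ring

lemma CondH.cbrtMP_le {c : ℝ} (H : S.CondH (c ^ 6)) : S.cbrtMP ≤ S.m * c ^ 2 := by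
  refine le_of_pow_le_pow_left₀ three_ne_zero (by positivity) ?_
  calc S.cbrtMP ^ 3 = S.m * S.P := S.cbrtMP_pow_three
    _ ≤ S.m ^ 3 * c ^ 6 := by
        gcongr
        · exact le_self_pow₀ S.one_le_m three_ne_zero
        · exact H.2.2.2.2.2.2.2.2.2.2.2
    _ = (S.m * c ^ 2) ^ 3 := by ring

lemma CondH.mul_cross_le {c : ℝ} (hc : 0 < c) (H : S.CondH (c ^ 6)) (hT : (16 : ℝ) ≤ S.T) :
    c * (S.N * S.P * S.crossBound * S.cbrtMP * S.logHorizon) ≤ 3 * S.noiseSq := by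
  have hL := H.logHorizon_pos
  have hMP := S.one_le_cbrtMP
  calc c * (S.N * S.P * S.crossBound * S.cbrtMP * S.logHorizon)
      ≤ c * (S.N * S.P * (3 * S.sigman ^ 2 * (√S.d * S.logHorizon)) * (S.m * c ^ 2) *
          S.logHorizon) := by
        gcongr
        · exact crossBound_le hT
        · exact H.cbrtMP_le
    _ = 3 * (S.sigman ^ 2 * (√S.d * (c ^ 3 * (S.m * S.P * S.N * S.logHorizon ^ 2)))) := by ring
    _ ≤ 3 * (S.sigman ^ 2 * (√S.d * √S.d)) := by
        gcongr
        exact H.pow_three_mul_le_sqrt_d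
    _ = 3 * S.noiseSq := by rw [Real.mul_self_sqrt (Nat.cast_nonneg _), noiseSq]

lemma CondH.cross_le (hζ : 0 < ζ) (hC : 2000 ≤ C) (hCζ : (3 / ζ) ^ 6 ≤ C) (H : S.CondH C) :
    S.N * S.P * S.crossBound * S.cbrtMP * S.logHorizon ≤ ζ * S.noiseSq := by
  have hT := H.sixteen_le_T hC
  obtain ⟨c, hc, rfl⟩ : ∃ c : ℝ, 0 < c ∧ c ^ 6 = C :=
    ⟨C ^ ((6 : ℕ) : ℝ)⁻¹, Real.rpow_pos_of_pos H.pos _,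
      Real.rpow_inv_natCast_pow H.pos.le (by norm_num)⟩
  have hcζ : 3 ≤ c * ζ := (div_le_iff₀ hζ).1 (le_of_pow_le_pow_left₀ (by norm_num) hc.le hCζ)
  refine le_of_mul_le_mul_left ?_ hc
  calc c * (S.N * S.P * S.crossBound * S.cbrtMP * S.logHorizon) ≤ 3 * S.noiseSq :=
        H.mul_cross_le hc hT
    _ ≤ c * ζ * S.noiseSq := mul_le_mul_of_nonneg_right hcζ S.noiseSq_pos.le
    _ = c * (ζ * S.noiseSq) := mul_assoc ..

/-! ### The sparse-unlearnable regime -/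

variable (S) in
lemma N_mul_one_sub_pun : (S.N : ℝ) * (1 - S.pun) = #S.SL := by
  have hN := one_pos.trans_le S.one_le_N
  have hcard : #S.SL + #S.SU = S.N := by
    rw [← Finset.card_union_of_disjoint S.hdisj, S.hunion, Finset.card_univ, Fintype.card_fin]
  rw [pun, mul_sub, mul_one, mul_div_cancel₀ _ hN.ne', sub_eq_iff_eq_add]
  exact_mod_cast hcard.symm

lemma SparseRegime.SU_nonempty (hS : S.SparseRegime C) (hC : 0 < C) : S.SU.Nonempty := by
  have hN := one_pos.trans_le S.one_le_N
  have hpun : 0 < S.pun := (div_pos hC hN).trans_le hS.1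
  rw [pun, div_pos_iff_of_pos_right hN] at hpun
  exact Finset.card_pos.1 (by exact_mod_cast hpun)

lemma CondH.log_d_le_logFull (H : S.CondH C) : Real.log S.d ≤ S.logFull := by
  have hd := S.d_pos
  have hN := S.one_le_N
  have hm := S.one_le_m
  have hP := S.one_le_P
  have hT := H.one_le_T
  refine Real.log_le_log hd ((le_div_iff₀ S.hdelta0).2 ?_)
  calc (S.d : ℝ) * S.delta ≤ 1 * S.d * 1 * 1 * 1 := by nlinarith [S.hdelta1]
    _ ≤ S.T * S.d * S.N * S.m * S.P := by gcongr

lemma SparseRegime.pun_le (hS : S.SparseRegime C) (H : S.CondH C) : S.pun ≤ C⁻¹ := by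
  have hN := one_pos.trans_le S.one_le_N
  have hlogN : Real.log S.d ≤ S.N := by
    calc Real.log S.d ≤ 1 * 1 * 1 * S.logFull := by linarith [H.log_d_le_logFull]
      _ ≤ C * S.m * S.P * S.logFull := by
          have := H.logFull_pos
          have := H.pos
          gcongr
          exacts [H.1, S.one_le_m, S.one_le_P]
      _ ≤ S.N := hS.2.2
  calc S.pun ≤ C⁻¹ * Real.log S.d / S.N := hS.2.1
    _ ≤ C⁻¹ := (div_le_iff₀ hN).2 (mul_le_mul_of_nonneg_left hlogN (inv_nonneg.2 H.pos.le))

lemma SparseRegime.SL_nonempty (hS : S.SparseRegime C) (hC : 1 < C) (H : S.CondH C) :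
    S.SL.Nonempty := by
  have hpos : 0 < (S.N : ℝ) * (1 - S.pun) :=
    mul_pos (one_pos.trans_le S.one_le_N) (by linarith [hS.pun_le H, inv_lt_one_of_one_lt₀ hC])
  rw [S.N_mul_one_sub_pun] at hpos
  exact Finset.card_pos.1 (by exact_mod_cast hpos)

lemma CondH.signal_large (H : S.CondH C) (hSL : S.SL.Nonempty) :
    C ^ 3 * S.sigman ^ 3 * (S.d * √S.d) * S.logHorizon ^ 3 ≤ S.alpha ^ 3 * #S.SL := by
  have hcard : (0 : ℝ) < #S.SL := by exact_mod_cast hSL.card_pos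
  have hC := H.pos
  have hL := H.logHorizon_pos
  have hσ := S.hsigman
  have hsignal : C * S.sigman * √S.d * S.logHorizon ≤ S.alpha * (#S.SL : ℝ) ^ ((1 : ℝ) / 3) :=
    (div_le_iff₀ (by positivity)).1 (S.N_mul_one_sub_pun ▸ H.2.2.2.1)
  calc C ^ 3 * S.sigman ^ 3 * (S.d * √S.d) * S.logHorizon ^ 3
      = C ^ 3 * S.sigman ^ 3 * (√S.d ^ 2 * √S.d) * S.logHorizon ^ 3 := by
        rw [Real.sq_sqrt (Nat.cast_nonneg _)]
    _ = (C * S.sigman * √S.d * S.logHorizon) ^ 3 := by ring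
    _ ≤ (S.alpha * (#S.SL : ℝ) ^ ((1 : ℝ) / 3)) ^ 3 := by gcongr
    _ = S.alpha ^ 3 * #S.SL := by rw [mul_pow, rpow_one_third_pow_three hcard.le]

lemma CondH.mul_initNoise_le (hC : 2000 ≤ C) (H : S.CondH C) :
    C * S.initNoise * S.cbrtMP ≤ 2 := by
  have hMP := S.one_le_cbrtMP
  have hω := S.initScale_pos
  have hsqrt : √S.logConf ≤ S.logFull :=
    (Real.sqrt_le_self_iff.2 (.inr (by linarith [S.two_le_logConf]))).trans
      ((logConf_le_logHorizon (H.sixteen_le_T hC)).trans H.logHorizon_le_logFull)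
  calc C * S.initNoise * S.cbrtMP = C * (2 * S.initScale * √S.logConf) * S.cbrtMP := by
        rw [initNoise_eq_initScale_mul]
    _ ≤ C * (2 * S.initScale * S.logFull) * S.cbrtMP := by gcongr
    _ = 2 * (C * (S.initScale * S.logFull) * S.cbrtMP) := by ring
    _ ≤ 2 := by linarith [H.mul_initScale_mul_logFull_le]

lemma CondH.mul_initSignal_le (hC : 2000 ≤ C) (H : S.CondH C) :
    C * (S.alpha * S.initSignal) * S.cbrtM ≤ 2 := by
  have hα := S.halpha
  have hσ0 := S.hsigma0
  have hM := S.one_le_cbrtM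
  have hL := S.two_le_logConf
  have hLF : S.logConf ≤ S.logFull :=
    (logConf_le_logHorizon (H.sixteen_le_T hC)).trans H.logHorizon_le_logFull
  have hsqrt : √(2 * Real.log (16 * S.m / S.delta)) ≤ 2 * S.logFull :=
    Real.sqrt_le_iff.2 ⟨by linarith, by nlinarith [S.log_sixteen_mul_m_div_le_logConf]⟩
  calc C * (S.alpha * S.initSignal) * S.cbrtM
      ≤ C * (S.alpha * (S.sigma0 * (2 * S.logFull))) * S.cbrtM := by
        rw [initSignal]
        gcongr
    _ = 2 * (C * (S.alpha * S.sigma0 * S.logFull) * S.cbrtM) := by ring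
    _ ≤ 2 := by linarith [H.mul_alpha_mul_sigma0_mul_logFull_le]

lemma CondH.mul_eps_le (H : S.CondH C) : C * S.eps ≤ S.alpha := by
  rw [← le_inv_mul_iff₀ H.pos]
  exact H.2.2.2.2.2.2.2.1.le.trans
    (mul_le_mul_of_nonneg_left (min_le_left _ _) (inv_nonneg.2 H.pos.le))

lemma CondH.timeScale_large (hC : 2000 ≤ C) (H : S.CondH C) :
    76800 * (S.logConf * √S.logConf) ≤ S.timeScale := by
  have hL := S.two_le_logConf
  have hLH := logConf_le_logHorizon (H.sixteen_le_T hC)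
  have hsqrt : √S.logConf ≤ S.logConf := Real.sqrt_le_self_iff.2 (.inr (by linarith))
  calc 76800 * (S.logConf * √S.logConf) ≤ C ^ 2 * (S.logHorizon * S.logFull) := by
        have hLH0 : 0 ≤ S.logHorizon := by linarith
        gcongr
        · nlinarith
        · exact hsqrt.trans (hLH.trans H.logHorizon_le_logFull)
    _ ≤ S.timeScale := H.sq_mul_logHorizon_mul_logFull_le

lemma CondH.wellScaled (H : S.CondH C) (hS : S.SparseRegime C) (hζ : 0 < ζ) (hζ' : ζ ≤ 1 / 2500)
    (hC : 2000 ≤ C) (hCζ : 2 ≤ C * ζ) (hCζ' : (3 / ζ) ^ 6 ≤ C) : S.WellScaled ζ C :=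
  have hT := H.sixteen_le_T hC
  have hLH := logConf_le_logHorizon hT
  have hSL := hS.SL_nonempty (by linarith) H
  { zeta_pos := hζ
    zeta_le := hζ'
    le_const := hC
    const_mul_zeta := hCζ
    one_le_logConf := one_le_two.trans S.two_le_logConf
    logConf_le := hLH
    two_le_logHorizon := S.two_le_logConf.trans hLH
    T_pos := Nat.cast_pos.1 (one_pos.trans_le H.one_le_T)
    exp_neg_le := exp_neg_logHorizon_le H.one_le_T
    cross := H.cross_le hζ hC hCζ'
    initNoise_small := H.mul_initNoise_le hC
    initSignal_small := H.mul_initSignal_le hC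
    eta_noise := H.mul_eta_mul_noiseSq_le
    eta_signal := H.mul_eta_mul_alpha_sq_le
    signal_large := H.signal_large hSL
    eps_small := H.mul_eps_le
    SU_nonempty := hS.SU_nonempty H.pos
    SL_nonempty := hSL
    two_le_P := H.2.2.2.2.2.2.2.2.2.2.1
    timeScale_large := H.timeScale_large hC
    timeScale_le := H.mul_timeScale_le }

end Setting

theorem stmt14_general {C0 C1 : ℝ} (hC0 : 0 < C0) (hC1 : 0 < C1) :
    ∃ Cbar : ℝ, 0 < Cbar ∧ ∀ C, Cbar ≤ C →
      ∀ S : Setting, S.ATDyn → S.EventE → S.CondH C → S.SparseRegime C →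
        ((S.N : ℝ) /
            (76800 * Real.log ((16 : ℝ) * S.N * S.m * S.P / S.delta) ^ ((3 : ℝ) / 2) *
              S.eta * S.sigma0 * S.sigman ^ 3 * ((S.d : ℝ) * Real.sqrt S.d)) ≤ (S.T1 C1 : ℝ) ∧
          (S.T1 C1 : ℝ) ≤
            60 * S.N * (1 + Real.exp (4 * C1 ^ 3)) /
              (S.eta * S.sigma0 * S.sigman ^ 3 * ((S.d : ℝ) * Real.sqrt S.d))) ∧
        S.T0 C0 < S.T1 C1 ∧
        (∃ i ∈ S.SU, ∃ j, j ≠ S.sig i ∧ ∃ r : Fin S.m,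
          ∀ t, S.T1 C1 ≤ t → t ≤ S.T →
            C1 / (3 * ((S.m : ℝ) * S.P) ^ ((1 : ℝ) / 3)) ≤ S.y i * dot (S.w t r) (S.x i j)) := by
  obtain ⟨ζ, hζ, hζ', hζ1⟩ : ∃ ζ : ℝ, 0 < ζ ∧ ζ ≤ 1 / 2500 ∧ 125 * ζ ≤ C1 :=
    ⟨min (1 / 2500) (C1 / 125), by positivity, min_le_left _ _,
      (le_div_iff₀' (by norm_num)).1 (min_le_right _ _)⟩
  set K0 := 300000 * (1 + Real.exp (C0 ^ 3 + 1))
  set K1 := 300000 * (22 * (1700 * (1 + Real.exp (4 * C1 ^ 3))) ^ 2)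
  have hK0 : 0 < K0 := by positivity
  have hK1 : 0 < K1 := by positivity
  have hcross : 0 < (3 / ζ) ^ 6 := by positivity
  have hinit : 0 < 2 / ζ := by positivity
  refine ⟨2000 + C1 + K0 + K1 + (3 / ζ) ^ 6 + 2 / ζ, by linarith, fun C hC S hdyn hE H hS => ?_⟩
  have hCζ : 2 ≤ C * ζ := (div_le_iff₀ hζ).1 (by linarith)
  have hW : S.WellScaled ζ C := H.wellScaled hS hζ hζ' (by linarith) hCζ (by linarith)
  have hlog : S.logConf ^ ((3 : ℝ) / 2) = S.logConf * √S.logConf :=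
    rpow_three_halves (zero_le_one.trans hW.one_le_logConf)
  obtain ⟨⟨hlow, hhigh⟩, hT0, hresp⟩ := hW.memorization_time hdyn hE hC0.le hC1 hζ1
    (by linarith) (by linarith) (by linarith)
  refine ⟨⟨hlow.trans_eq' ?_, hhigh.trans_eq ?_⟩, hT0, hresp⟩
  · rw [← Setting.logConf, hlog, Setting.timeScale, div_div]
    ring_nf
  · rw [Setting.timeScale]
    ring

/-- Noise memorization time. On the event `E`, under Condition (H)
in the sparse-unlearnable regime: (1) the hitting time `T₁` obeys the stated two-sided
bound; (2) `T₀ < T₁`; (3) some unlearnable sample has a memorized noise response of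
order `C₁/(3(mP)^{1/3})` at every iteration `t ∈ [T₁, T]`. -/
theorem stmt14 :
    ∃ C0 C1 C : ℝ, 0 < C0 ∧ 0 < C1 ∧ 0 < C ∧
      ∀ S : Setting, S.ATDyn → S.EventE → S.CondH C → S.SparseRegime C →
        ((S.N : ℝ) /
            (76800 * Real.log ((16 : ℝ) * S.N * S.m * S.P / S.delta) ^ ((3 : ℝ) / 2) *
              S.eta * S.sigma0 * S.sigman ^ 3 * ((S.d : ℝ) * Real.sqrt S.d)) ≤ (S.T1 C1 : ℝ) ∧
          (S.T1 C1 : ℝ) ≤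
            60 * S.N * (1 + Real.exp (4 * C1 ^ 3)) /
              (S.eta * S.sigma0 * S.sigman ^ 3 * ((S.d : ℝ) * Real.sqrt S.d))) ∧
        S.T0 C0 < S.T1 C1 ∧
        (∃ i ∈ S.SU, ∃ j, j ≠ S.sig i ∧ ∃ r : Fin S.m,
          ∀ t, S.T1 C1 ≤ t → t ≤ S.T →
            C1 / (3 * ((S.m : ℝ) * S.P) ^ ((1 : ℝ) / 3)) ≤ S.y i * dot (S.w t r) (S.x i j)) := by
  obtain ⟨C, hC, h⟩ := stmt14_general one_pos one_pos
  exact ⟨1, 1, C, one_pos, one_pos, hC, h C le_rfl⟩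

end AD

end
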